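/- Let d ∈ {xd, cd}, let 𝒞1 and 𝒞2 be non-empty classes of frames closed under disjoint unions, and let L_i be a one-variable modal logic (in disjoint modal signatures) globally d-complete for 𝒞_i (i = 1,2). If L1 and L2 are both globally decidable, then the fusion L1 ⊗ L2 is globally decidable. -/

import Mathlib

namespace OneVarML

/-- One-variable first-order modal formulas over modal signature `M`:
atoms `P n` stand for `Pₙ(x)`, `ex φ` stands for `∃x φ`. -/
inductive OV (M : Type) : Type
  | atom : ℕ → OV M
  | neg  : OV M → OV M
  | and  : OV M → OV M → OV M
  | ex   : OV M → OV M
  | box  : M → OV M → OV M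
  deriving DecidableEq

namespace OV

variable {M M' : Type}

/-- implication, defined from `¬`, `∧` -/
def imp (φ ψ : OV M) : OV M := .neg (.and φ (.neg ψ))

/-- disjunction -/
def or (φ ψ : OV M) : OV M := .neg (.and (.neg φ) (.neg ψ))

/-- universal quantifier `∀x φ := ¬∃x¬φ` -/
def all (φ : OV M) : OV M := .neg (.ex (.neg φ))

/-- renaming of modal operators -/
def mapOp (f : M → M') : OV M → OV M'
  | atom n => atom n
  | neg φ => neg (mapOp f φ)
  | and φ ψ => and (mapOp f φ) (mapOp f ψ)
  | ex φ => ex (mapOp f φ)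
  | box m φ => box (f m) (mapOp f φ)

/-- uniform substitution of one-variable formulas for the atoms `Pₙ(x)` -/
def subst (σ : ℕ → OV M) : OV M → OV M
  | atom n => σ n
  | neg φ => neg (subst σ φ)
  | and φ ψ => and (subst σ φ) (subst σ ψ)
  | ex φ => ex (subst σ φ)
  | box m φ => box m (subst σ φ)

/-- formulas without modal operators -/
def boxFree : OV M → Prop
  | atom _ => True
  | neg φ => boxFree φ
  | and φ ψ => boxFree φ ∧ boxFree ψ
  | ex φ => boxFree φ
  | box _ _ => False

/-- classical evaluation of a (box-free) one-variable formula in a classical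
first-order structure with domain `D`, interpretation `I`, at element `a` -/
def clEval (D : Type) (I : ℕ → Set D) : OV M → D → Prop
  | atom n, a => a ∈ I n
  | neg φ, a => ¬ clEval D I φ a
  | and φ ψ, a => clEval D I φ a ∧ clEval D I ψ a
  | ex φ, _ => ∃ b : D, clEval D I φ b
  | box _ _, _ => True

end OV

/-- the one-variable fragment of classical first-order logic: box-free
formulas valid in all classical structures -/
def FOone (M : Type) : Set (OV M) :=
  {φ | φ.boxFree ∧ ∀ (D : Type) (I : ℕ → Set D) (a : D), OV.clEval D I φ a}

/-- A one-variable `M`-logic: includes one-variable classical FO and the K-axioms,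
closed under Modus Ponens, Generalisation, Necessitation and Substitution. -/
structure IsOVLogic {M : Type} (L : Set (OV M)) : Prop where
  fo : FOone M ⊆ L
  kax : ∀ (m : M) (n k : ℕ),
    OV.imp (.box m (OV.imp (.atom n) (.atom k)))
      (OV.imp (.box m (.atom n)) (.box m (.atom k))) ∈ L
  mp : ∀ φ ψ, OV.imp φ ψ ∈ L → φ ∈ L → ψ ∈ L
  gen : ∀ φ, φ ∈ L → OV.all φ ∈ L
  nec : ∀ m φ, φ ∈ L → OV.box m φ ∈ L
  subst : ∀ (σ : ℕ → OV M) φ, φ ∈ L → OV.subst σ φ ∈ L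

/-- A Kripke `M`-frame. -/
structure KFrame (M : Type) where
  W : Type
  ne : Nonempty W
  R : M → W → W → Prop

/-- the two domain semantics: expanding (`xd`) and constant (`cd`) domains -/
inductive DSem : Type
  | xd | cd
  deriving DecidableEq

/-- A Kripke model (with expanding domains) based on a frame `F`:
a family of classical structures over subsets of one big domain `D`,
expanding along all accessibility relations. -/
structure KModel {M : Type} (F : KFrame M) where
  D : Type
  dom : F.W → Set D
  domNe : ∀ w, (dom w).Nonempty
  expand : ∀ (m : M) (w v : F.W), F.R m w v → dom w ⊆ dom v
  I : F.W → ℕ → Set D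

namespace KModel

variable {M : Type} {F : KFrame M}

/-- a `d`-model: for `cd`, all the domains coincide (with the common domain) -/
def IsD (𝔪 : KModel F) (d : DSem) : Prop :=
  d = DSem.cd → ∀ w, 𝔪.dom w = Set.univ

/-- truth of a formula at a world under an assignment (value of `x`) -/
def eval (𝔪 : KModel F) : OV M → F.W → 𝔪.D → Prop
  | .atom n, w, a => a ∈ 𝔪.I w n
  | .neg φ, w, a => ¬ 𝔪.eval φ w a
  | .and φ ψ, w, a => 𝔪.eval φ w a ∧ 𝔪.eval ψ w a
  | .ex φ, w, _ => ∃ b ∈ 𝔪.dom w, 𝔪.eval φ w b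
  | .box m φ, w, a => ∀ v, F.R m w v → 𝔪.eval φ v a

/-- `φ` is true at `w` if it holds under every assignment into the domain of `w` -/
def TrueAt (𝔪 : KModel F) (φ : OV M) (w : F.W) : Prop :=
  ∀ a ∈ 𝔪.dom w, 𝔪.eval φ w a

/-- `φ` is true in the model if it is true at every world -/
def TrueIn (𝔪 : KModel F) (φ : OV M) : Prop := ∀ w, 𝔪.TrueAt φ w

/-- a finite model: finitely many worlds, all domains finite -/
def FiniteM (𝔪 : KModel F) : Prop := Finite F.W ∧ ∀ w, (𝔪.dom w).Finite

end KModel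

/-- `Log_d 𝒞`: the formulas true in every `d`-model based on a frame from `𝒞` -/
def LogD {M : Type} (d : DSem) (C : Set (KFrame M)) : Set (OV M) :=
  {φ | ∀ F ∈ C, ∀ 𝔪 : KModel F, 𝔪.IsD d → 𝔪.TrueIn φ}

/-- disjoint union of a family of frames -/
def KFrame.disjUnion {M ι : Type} (hι : Nonempty ι) (Fs : ι → KFrame M) : KFrame M where
  W := Σ i, (Fs i).W
  ne := ⟨⟨Classical.choice hι, Classical.choice (Fs (Classical.choice hι)).ne⟩⟩
  R := fun m a b => ∃ (i : ι) (w v : (Fs i).W), (Fs i).R m w v ∧ a = ⟨i, w⟩ ∧ b = ⟨i, v⟩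

/-- a class of frames closed under (arbitrary) disjoint unions -/
def ClosedDU {M : Type} (C : Set (KFrame M)) : Prop :=
  ∀ (ι : Type) (hι : Nonempty ι) (Fs : ι → KFrame M),
    (∀ i, Fs i ∈ C) → KFrame.disjUnion hι Fs ∈ C

/-- reduct of a frame along a map of modal signatures -/
def KFrame.reduct {M M' : Type} (f : M' → M) (F : KFrame M) : KFrame M' :=
  ⟨F.W, F.ne, fun m => F.R (f m)⟩

/-- fusion `𝒞1 ⊗ 𝒞2` of classes of frames: the frames over a common set of worlds
whose `M1`-reduct is in `𝒞1` and whose `M2`-reduct is in `𝒞2` -/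
def frameFusion {M1 M2 : Type} (C1 : Set (KFrame M1)) (C2 : Set (KFrame M2)) :
    Set (KFrame (M1 ⊕ M2)) :=
  {F | F.reduct Sum.inl ∈ C1 ∧ F.reduct Sum.inr ∈ C2}

/-- fusion `L1 ⊗ L2` of one-variable logics: the smallest one-variable
`(M1 ⊕ M2)`-logic containing (the copies of) `L1` and `L2` -/
def fusion {M1 M2 : Type} (L1 : Set (OV M1)) (L2 : Set (OV M2)) : Set (OV (M1 ⊕ M2)) :=
  ⋂₀ {L | IsOVLogic L ∧ OV.mapOp Sum.inl '' L1 ⊆ L ∧ OV.mapOp Sum.inr '' L2 ⊆ L}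

/-- local derivability from a logic: closure under Modus Ponens and Generalisation -/
inductive Deriv {M : Type} (L : Set (OV M)) : OV M → Prop
  | ax {φ} : φ ∈ L → Deriv L φ
  | mp {φ ψ} : Deriv L (OV.imp φ ψ) → Deriv L φ → Deriv L ψ
  | gen {φ} : Deriv L φ → Deriv L (OV.all φ)

/-- global consequence `φ ⊢*_L ψ`: `ψ` is in the smallest set including `L ∪ {φ}`
closed under Modus Ponens, Generalisation and Necessitation -/
inductive GlobalConseq {M : Type} (L : Set (OV M)) (φ : OV M) : OV M → Prop
  | ax {ψ} : ψ ∈ L → GlobalConseq L φ ψ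
  | prem : GlobalConseq L φ φ
  | mp {ψ χ} : GlobalConseq L φ (OV.imp ψ χ) → GlobalConseq L φ ψ → GlobalConseq L φ χ
  | gen {ψ} : GlobalConseq L φ ψ → GlobalConseq L φ (OV.all ψ)
  | nec (m : M) {ψ} : GlobalConseq L φ ψ → GlobalConseq L φ (OV.box m ψ)

/-- `L` is `d`-complete for `𝒞` -/
def DComplete {M : Type} (d : DSem) (L : Set (OV M)) (C : Set (KFrame M)) : Prop :=
  L = LogD d C

/-- `L` is globally `d`-complete for `𝒞` -/
def GloballyDComplete {M : Type} (d : DSem) (L : Set (OV M)) (C : Set (KFrame M)) : Prop :=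
  ∀ φ ψ, GlobalConseq L φ ψ ↔
    ∀ F ∈ C, ∀ 𝔪 : KModel F, 𝔪.IsD d → 𝔪.TrueIn φ → 𝔪.TrueIn ψ

/-- a non-trivial frame: some `R_□` relates two distinct worlds -/
def KFrame.Nontrivial {M : Type} (F : KFrame M) : Prop :=
  ∃ (m : M) (w v : F.W), w ≠ v ∧ F.R m w v

/-- the fixed Gödel numbering of one-variable formulas (relative to a numbering
`eM` of modal operators) -/
def OV.encode {M : Type} (eM : M → ℕ) : OV M → ℕ
  | .atom n => Nat.pair 0 n
  | .neg φ => Nat.pair 1 (OV.encode eM φ)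
  | .and φ ψ => Nat.pair 2 (Nat.pair (OV.encode eM φ) (OV.encode eM ψ))
  | .ex φ => Nat.pair 3 (OV.encode eM φ)
  | .box m φ => Nat.pair 4 (Nat.pair (eM m) (OV.encode eM φ))

/-- `L` is decidable: membership in `L` is computable w.r.t. the Gödel numbering -/
def DecidableLogic {M : Type} (eM : M → ℕ) (L : Set (OV M)) : Prop :=
  ComputablePred (fun n : ℕ => ∃ φ ∈ L, OV.encode eM φ = n)

/-- `L` is globally decidable: the global consequence relation is computable -/
def GloballyDecidable {M : Type} (eM : M → ℕ) (L : Set (OV M)) : Prop :=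
  ComputablePred (fun p : ℕ × ℕ =>
    ∃ φ ψ, GlobalConseq L φ ψ ∧ OV.encode eM φ = p.1 ∧ OV.encode eM ψ = p.2)

/-- the (local) finite `d`-model property -/
def FMP {M : Type} (d : DSem) (L : Set (OV M)) : Prop :=
  ∀ φ, φ ∉ L → ∃ (F : KFrame M) (𝔪 : KModel F), 𝔪.IsD d ∧ 𝔪.FiniteM ∧
    (∀ χ ∈ L, 𝔪.TrueIn χ) ∧ ∃ w, ¬ 𝔪.TrueAt φ w

/-- the global finite `d`-model property -/
def GlobalFMP {M : Type} (d : DSem) (L : Set (OV M)) : Prop :=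
  ∀ φ ψ, ¬ GlobalConseq L φ ψ →
    ∃ (F : KFrame M) (𝔪 : KModel F), 𝔪.IsD d ∧ 𝔪.FiniteM ∧
      (∀ χ ∈ L, 𝔪.TrueIn χ) ∧ 𝔪.TrueIn φ ∧ ∃ w, ¬ 𝔪.TrueAt ψ w

end OneVarML

namespace OneVarML
open OV

structure Ops (α : Type) where
  ng : α → α
  an : α → α → α
  ex : α → α
  tp : α

namespace Ops
variable {α β : Type}

def ty (o : Ops α) : List α → List α
  | [] => [o.tp]
  | u :: l => (o.ty l).flatMap fun t => [o.an u t, o.an (o.ng u) t]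

def wt (o : Ops α) (l : List α) : List α := o.ty ((o.ty l).map o.ex)

def dj (o : Ops α) : List α → α
  | [] => o.ng o.tp
  | u :: l => o.ng (o.an (o.ng u) (o.ng (o.dj l)))

structure Hom (o : Ops α) (o' : Ops β) (h : α → β) : Prop where
  ng : ∀ a, h (o.ng a) = o'.ng (h a)
  an : ∀ a b, h (o.an a b) = o'.an (h a) (h b)
  ex : ∀ a, h (o.ex a) = o'.ex (h a)
  tp : h o.tp = o'.tp

theorem Hom.ty {o : Ops α} {o' : Ops β} {h : α → β} (H : Hom o o' h) (l : List α) :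
    (o.ty l).map h = o'.ty (l.map h) := by
  induction l with
  | nil => simp [Ops.ty, H.tp]
  | cons u l ih =>
    simp only [Ops.ty, List.map_cons, ← ih, List.map_flatMap, List.flatMap_map]
    simp [H.an, H.ng]

theorem Hom.wt {o : Ops α} {o' : Ops β} {h : α → β} (H : Hom o o' h) (l : List α) :
    (o.wt l).map h = o'.wt (l.map h) := by
  have : h ∘ o.ex = o'.ex ∘ h := by
    funext a; simp [H.ex]
  rw [Ops.wt, H.ty, List.map_map, this, ← List.map_map, H.ty]; rfl

theorem Hom.dj {o : Ops α} {o' : Ops β} {h : α → β} (H : Hom o o' h) (l : List α) :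
    h (o.dj l) = o'.dj (l.map h) := by
  induction l with
  | nil => simp [Ops.dj, H.tp, H.ng]
  | cons u l ih => simp [Ops.dj, H.an, H.ng, ih]

end Ops

def subL {α : Type} : List α → List (List α)
  | [] => [[]]
  | u :: l => (subL l).flatMap fun s => [s, u :: s]

theorem subL_map {α β : Type} (h : α → β) (l : List α) :
    (subL l).map (List.map h) = subL (l.map h) := by
  induction l with
  | nil => rfl
  | cons u l ih =>
    simp only [subL, List.map_cons, ← ih, List.map_flatMap, List.flatMap_map]
    simp

theorem subL_subset {α : Type} (l : List α) : ∀ s ∈ subL l, s ⊆ l := by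
  induction l with
  | nil => simp [subL]
  | cons u l ih =>
    intro s hs
    simp only [subL, List.mem_flatMap, List.mem_cons, List.not_mem_nil, or_false] at hs
    obtain ⟨t, ht, rfl | rfl⟩ := hs
    · exact List.subset_cons_of_subset _ (ih _ ht)
    · exact List.cons_subset_cons _ (ih _ ht)

theorem filter_mem_subL {α : Type} (p : α → Bool) (l : List α) : l.filter p ∈ subL l := by
  induction l with
  | nil => simp [subL]
  | cons u l ih =>
    simp only [subL, List.mem_flatMap, List.mem_cons, List.not_mem_nil, or_false]
    refine ⟨_, ih, ?_⟩
    by_cases h : p u <;> simp [h]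

def ovOps (M : Type) : Ops (OV M) where
  ng := .neg
  an := .and
  ex := .ex
  tp := .neg (.and (.atom 0) (.neg (.atom 0)))

section vals
variable {M : Type}

structure IsVal (V : OV M → Prop) : Prop where
  neg : ∀ a, V (.neg a) ↔ ¬ V a
  and : ∀ a b, V (.and a b) ↔ V a ∧ V b

theorem IsVal.tp {V : OV M → Prop} (h : IsVal V) : V (ovOps M).tp := by
  simp [ovOps, h.neg, h.and]

theorem IsVal.ty_exists {V : OV M → Prop} (h : IsVal V) (l : List (OV M)) :
    ∃ u ∈ (ovOps M).ty l, V u := by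
  induction l with
  | nil => exact ⟨_, by simp [Ops.ty], h.tp⟩
  | cons u l ih =>
    obtain ⟨t, ht, hV⟩ := ih
    simp only [Ops.ty, List.mem_flatMap, List.mem_cons, List.not_mem_nil, or_false]
    by_cases hu : V u
    · exact ⟨_, ⟨t, ht, Or.inl rfl⟩, (h.and _ _).2 ⟨hu, hV⟩⟩
    · exact ⟨_, ⟨t, ht, Or.inr rfl⟩, (h.and _ _).2 ⟨(h.neg _).2 hu, hV⟩⟩

theorem IsVal.ty_match {V V' : OV M → Prop} (h : IsVal V) (h' : IsVal V') (l : List (OV M)) :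
    ∀ u ∈ (ovOps M).ty l, V u → V' u → ∀ χ ∈ l, (V χ ↔ V' χ) := by
  induction l with
  | nil => simp
  | cons a l ih =>
    intro u hu hV hV'
    simp only [Ops.ty, List.mem_flatMap, List.mem_cons, List.not_mem_nil, or_false] at hu
    obtain ⟨t, ht, rfl | rfl⟩ := hu <;>
      simp only [ovOps, h.and, h'.and, h.neg, h'.neg] at hV hV' <;>
      intro χ hχ <;> rcases List.mem_cons.1 hχ with rfl | hχ
    · tauto
    · exact ih t ht hV.2 hV'.2 χ hχ
    · tauto
    · exact ih t ht hV.2 hV'.2 χ hχ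

theorem IsVal.dj {V : OV M → Prop} (h : IsVal V) (l : List (OV M)) :
    V ((ovOps M).dj l) ↔ ∃ u ∈ l, V u := by
  induction l with
  | nil =>
    have := h.tp
    simp only [ovOps] at this
    simp [Ops.dj, ovOps, h.neg] 
    simpa [h.neg] using this
  | cons u l ih =>
    simp only [Ops.dj, List.mem_cons, exists_eq_or_imp, ← ih]
    simp only [ovOps, h.neg, h.and]
    tauto
end vals

section synt
variable {M : Type}

noncomputable def uns (c : OV M → ℕ) (n : ℕ) : OV M :=
  if n % 2 = 0 then .atom (n / 2) else
    haveI : Nonempty (OV M) := ⟨.atom 0⟩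
    Function.invFun c (n / 2)

theorem uns_even (c : OV M → ℕ) (n : ℕ) : uns c (2 * n) = .atom n := by
  simp [uns]

theorem uns_odd {c : OV M → ℕ} (hc : Function.Injective c) (φ : OV M) :
    uns c (2 * c φ + 1) = φ := by
  have h1 : (2 * c φ + 1) % 2 = 1 := by omega
  have h2 : (2 * c φ + 1) / 2 = c φ := by omega
  have : Nonempty (OV M) := ⟨.atom 0⟩
  simp only [uns, h1, h2]
  simp [Function.leftInverse_invFun hc φ]

def red0 (c : OV M → ℕ) : OV M → OV M
  | .atom n => .atom (2 * n)
  | .neg φ => .neg (red0 c φ)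
  | .and φ ψ => .and (red0 c φ) (red0 c ψ)
  | .ex φ => .ex (red0 c φ)
  | .box m φ => .atom (2 * c (.box m φ) + 1)

theorem red0_boxFree (c : OV M → ℕ) (φ : OV M) : (red0 c φ).boxFree := by
  induction φ <;> simp_all [red0, boxFree]

theorem red0_subst {c : OV M → ℕ} (hc : Function.Injective c) (φ : OV M) :
    (red0 c φ).subst (uns c) = φ := by
  induction φ with
  | atom n => simp [red0, OV.subst, uns_even]
  | box m φ => simp only [red0, OV.subst, uns_odd hc]
  | neg φ ih => simp [red0, OV.subst, ih]
  | ex φ ih => simp [red0, OV.subst, ih]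
  | and φ ψ ih ih' => simp [red0, OV.subst, ih, ih']

theorem clVal (c : OV M → ℕ) (D : Type) (I : ℕ → Set D) (a : D) :
    IsVal (fun χ => clEval D I (red0 c χ) a) :=
  ⟨fun _ => Iff.rfl, fun _ _ => Iff.rfl⟩

theorem GC_fo {L : Set (OV M)} (hL : IsOVLogic L) {c : OV M → ℕ} (hc : Function.Injective c)
    (φ : OV M) (Γ : List (OV M)) (hΓ : ∀ γ ∈ Γ, GlobalConseq L φ γ) : ∀ χ : OV M,
    (∀ (D : Type) (I : ℕ → Set D), (∀ γ ∈ Γ, ∀ a, clEval D I (red0 c γ) a) →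
      ∀ a, clEval D I (red0 c χ) a) → GlobalConseq L φ χ := by
  induction Γ with
  | nil =>
    intro χ h
    apply GlobalConseq.ax
    rw [← red0_subst hc χ]
    apply hL.subst
    apply hL.fo
    exact ⟨red0_boxFree c χ, fun D I a => h D I (by simp) a⟩
  | cons γ Γ ih =>
    intro χ h
    have := ih (fun γ hγ => hΓ γ (by simp [hγ])) (OV.imp (OV.all γ) χ) (by
      intro D I hI a
      simp only [OV.imp, OV.all, red0, clEval]
      rintro ⟨h1, h2⟩
      apply h2
      apply h D I
      intro γ' hγ' b
      rcases List.mem_cons.1 hγ' with rfl | hγ'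
      · by_contra hb
        exact h1 ⟨b, hb⟩
      · exact hI _ hγ' b)
    exact this.mp (GlobalConseq.gen (hΓ γ (by simp)))

theorem GC_subst {L : Set (OV M)} (hL : IsOVLogic L) (σ : ℕ → OV M) {φ ψ : OV M}
    (h : GlobalConseq L φ ψ) : GlobalConseq L (φ.subst σ) (ψ.subst σ) := by
  induction h with
  | ax h => exact .ax (hL.subst _ _ h)
  | prem => exact .prem
  | mp _ _ h1 h2 => exact .mp h1 h2
  | gen _ h => exact .gen h
  | nec m _ h => exact .nec m h

theorem GC_cut {L : Set (OV M)} {φ ψ χ : OV M}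
    (h1 : GlobalConseq L φ ψ) (h : GlobalConseq L ψ χ) : GlobalConseq L φ χ := by
  induction h with
  | ax h => exact .ax h
  | prem => exact h1
  | mp _ _ h1 h2 => exact .mp h1 h2
  | gen _ h => exact .gen h
  | nec m _ h => exact .nec m h

theorem GC_map {N : Type} {L : Set (OV M)} {L' : Set (OV N)} (f : M → N)
    (hL : OV.mapOp f '' L ⊆ L') {φ ψ : OV M}
    (h : GlobalConseq L φ ψ) : GlobalConseq L' (φ.mapOp f) (ψ.mapOp f) := by
  induction h with
  | ax h => exact .ax (hL ⟨_, h, rfl⟩)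
  | prem => exact .prem
  | mp _ _ h1 h2 => exact .mp h1 h2
  | gen _ h => exact .gen h
  | nec m _ h => exact .nec (f m) h

variable {M1 M2 : Type}

theorem fusion_isLogic (L1 : Set (OV M1)) (L2 : Set (OV M2)) : IsOVLogic (fusion L1 L2) where
  fo := fun _ hφ _ hL => hL.1.fo hφ
  kax := fun m n k _ hL => hL.1.kax m n k
  mp := fun φ ψ h1 h2 L hL => hL.1.mp φ ψ (h1 L hL) (h2 L hL)
  gen := fun φ h L hL => hL.1.gen φ (h L hL)
  nec := fun m φ h L hL => hL.1.nec m φ (h L hL)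
  subst := fun σ φ h L hL => hL.1.subst σ φ (h L hL)

theorem fusion_inl (L1 : Set (OV M1)) (L2 : Set (OV M2)) :
    OV.mapOp Sum.inl '' L1 ⊆ fusion L1 L2 := fun _ h _ hL => hL.2.1 h

theorem fusion_inr (L1 : Set (OV M1)) (L2 : Set (OV M2)) :
    OV.mapOp Sum.inr '' L2 ⊆ fusion L1 L2 := fun _ h _ hL => hL.2.2 h

def red1 (c : OV (M1 ⊕ M2) → ℕ) : OV (M1 ⊕ M2) → OV M1
  | .atom n => .atom (2 * n)
  | .neg φ => .neg (red1 c φ)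
  | .and φ ψ => .and (red1 c φ) (red1 c ψ)
  | .ex φ => .ex (red1 c φ)
  | .box (.inl m) φ => .box m (red1 c φ)
  | .box (.inr m) φ => .atom (2 * c (.box (.inr m) φ) + 1)

def red2 (c : OV (M1 ⊕ M2) → ℕ) : OV (M1 ⊕ M2) → OV M2
  | .atom n => .atom (2 * n)
  | .neg φ => .neg (red2 c φ)
  | .and φ ψ => .and (red2 c φ) (red2 c ψ)
  | .ex φ => .ex (red2 c φ)
  | .box (.inr m) φ => .box m (red2 c φ)
  | .box (.inl m) φ => .atom (2 * c (.box (.inl m) φ) + 1)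

theorem red1_subst {c : OV (M1 ⊕ M2) → ℕ} (hc : Function.Injective c) (φ : OV (M1 ⊕ M2)) :
    ((red1 c φ).mapOp Sum.inl).subst (uns c) = φ := by
  induction φ with
  | atom n => simp [red1, OV.subst, OV.mapOp, uns_even]
  | box m φ ih =>
    rcases m with m | m
    · simp [red1, OV.subst, OV.mapOp, ih]
    · simp only [red1, OV.subst, OV.mapOp, uns_odd hc]
  | neg φ ih => simp [red1, OV.subst, OV.mapOp, ih]
  | ex φ ih => simp [red1, OV.subst, OV.mapOp, ih]
  | and φ ψ ih ih' => simp [red1, OV.subst, OV.mapOp, ih, ih']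

theorem red2_subst {c : OV (M1 ⊕ M2) → ℕ} (hc : Function.Injective c) (φ : OV (M1 ⊕ M2)) :
    ((red2 c φ).mapOp Sum.inr).subst (uns c) = φ := by
  induction φ with
  | atom n => simp [red2, OV.subst, OV.mapOp, uns_even]
  | box m φ ih =>
    rcases m with m | m
    · simp only [red2, OV.subst, OV.mapOp, uns_odd hc]
    · simp [red2, OV.subst, OV.mapOp, ih]
  | neg φ ih => simp [red2, OV.subst, OV.mapOp, ih]
  | ex φ ih => simp [red2, OV.subst, OV.mapOp, ih]
  | and φ ψ ih ih' => simp [red2, OV.subst, OV.mapOp, ih, ih']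

/-- The certificate condition. -/
def Cert (c : OV (M1 ⊕ M2) → ℕ) (L1 : Set (OV M1)) (L2 : Set (OV M2))
    (φ ψ : OV (M1 ⊕ M2)) (S : List (OV (M1 ⊕ M2))) : Prop :=
  ¬ GlobalConseq L1 (red1 c (.and φ ((ovOps _).dj S))) (red1 c ψ) ∧
  ∀ q ∈ S, ¬ GlobalConseq L1 (red1 c (.and φ ((ovOps _).dj S))) (red1 c (.neg q)) ∧
    ¬ GlobalConseq L2 (red2 c (.and φ ((ovOps _).dj S))) (red2 c (.neg q))

theorem cert_of_not {c : OV (M1 ⊕ M2) → ℕ} (hc : Function.Injective c)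
    (L1 : Set (OV M1)) (L2 : Set (OV M2))
    (φ ψ : OV (M1 ⊕ M2)) (Θ : List (OV (M1 ⊕ M2)))
    (h : ¬ GlobalConseq (fusion L1 L2) φ ψ) :
    ∃ S ∈ subL ((ovOps _).wt Θ), Cert c L1 L2 φ ψ S := by
  classical
  have hF := fusion_isLogic L1 L2
  set L := fusion L1 L2 with hLdef
  set Q := (ovOps (M1 ⊕ M2)).wt Θ with hQ
  set S := Q.filter (fun q => decide (¬ GlobalConseq L φ (.neg q))) with hS
  have key : GlobalConseq L φ (.and φ ((ovOps _).dj S)) := by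
    apply GC_fo hF hc φ (φ :: (Q.filter (fun q => decide (GlobalConseq L φ (.neg q)))).map .neg)
    · intro γ hγ
      rcases List.mem_cons.1 hγ with rfl | hγ
      · exact .prem
      · obtain ⟨q, hq, rfl⟩ := List.mem_map.1 hγ
        simpa using (List.mem_filter.1 hq).2
    · intro D I hI a
      refine ((clVal c D I a).and _ _).2 ⟨hI φ (by simp) a, ?_⟩
      refine ((clVal c D I a).dj S).2 ?_
      obtain ⟨q, hq, hqV⟩ := (clVal c D I a).ty_exists (((ovOps _).ty Θ).map (ovOps _).ex)
      refine ⟨q, ?_, hqV⟩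
      rw [hS, List.mem_filter]
      refine ⟨hq, ?_⟩
      simp only [decide_eq_true_eq]
      intro hneg
      exact hI (.neg q) (List.mem_cons_of_mem _ (List.mem_map.2 ⟨q, List.mem_filter.2 ⟨hq, by simpa using hneg⟩, rfl⟩)) a hqV
  have t1 : ∀ χ, GlobalConseq L1 (red1 c (.and φ ((ovOps _).dj S))) (red1 c χ) →
      GlobalConseq L φ χ := by
    intro χ hχ
    have := GC_subst hF (uns c) (GC_map Sum.inl (fusion_inl L1 L2) hχ)
    rw [red1_subst hc, red1_subst hc] at this
    exact GC_cut key this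
  have t2 : ∀ χ, GlobalConseq L2 (red2 c (.and φ ((ovOps _).dj S))) (red2 c χ) →
      GlobalConseq L φ χ := by
    intro χ hχ
    have := GC_subst hF (uns c) (GC_map Sum.inr (fusion_inr L1 L2) hχ)
    rw [red2_subst hc, red2_subst hc] at this
    exact GC_cut key this
  refine ⟨S, filter_mem_subL _ _, fun hh => h (t1 _ hh), fun q hq => ?_⟩
  have : ¬ GlobalConseq L φ (.neg q) := by simpa using (List.mem_filter.1 hq).2
  exact ⟨fun hh => this (t1 _ hh), fun hh => this (t2 _ hh)⟩

end synt
end OneVarML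

namespace OneVarML
open OV Cardinal

section glue
variable {M M1 M2 : Type}

structure Side (d : DSem) (Θ : Set (OV M)) {N : Type} (j : N → M) (G : KFrame N) (K : Type)
    (s : G.W → K → Option (Set (OV M))) : Prop where
  neg : ∀ x k t χ, OV.neg χ ∈ Θ → s x k = some t → (OV.neg χ ∈ t ↔ χ ∉ t)
  and : ∀ x k t χ χ', OV.and χ χ' ∈ Θ → s x k = some t → (OV.and χ χ' ∈ t ↔ χ ∈ t ∧ χ' ∈ t)
  ex : ∀ x k t χ, OV.ex χ ∈ Θ → s x k = some t →
    (OV.ex χ ∈ t ↔ ∃ k' t', s x k' = some t' ∧ χ ∈ t')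
  box : ∀ x k t m χ, OV.box (j m) χ ∈ Θ → s x k = some t →
    (OV.box (j m) χ ∈ t ↔ ∀ y, G.R m x y → ∃ t', s y k = some t' ∧ χ ∈ t')
  expand : ∀ m x y k, G.R m x y → (s x k).isSome → (s y k).isSome
  ne : ∀ x, ∃ k, (s x k).isSome
  cd : d = DSem.cd → ∀ x k, (s x k).isSome

structure SubCl (Θ : Set (OV M)) : Prop where
  neg : ∀ χ, OV.neg χ ∈ Θ → χ ∈ Θ
  and1 : ∀ χ χ', OV.and χ χ' ∈ Θ → χ ∈ Θ
  and2 : ∀ χ χ', OV.and χ χ' ∈ Θ → χ' ∈ Θ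
  ex : ∀ χ, OV.ex χ ∈ Θ → χ ∈ Θ
  box : ∀ m χ, OV.box m χ ∈ Θ → χ ∈ Θ

/-- evaluation on a frame of FO formulas, with substitution -/
theorem eval_subst {F : KFrame M} (𝔪 : KModel F) (σ : ℕ → OV M) (φ : OV M) :
    ∀ w, ∀ a ∈ 𝔪.dom w, (𝔪.eval (φ.subst σ) w a ↔
      KModel.eval (F := F) { 𝔪 with I := fun w n => {a | 𝔪.eval (σ n) w a} } φ w a) := by
  induction φ with
  | atom n => intro w a _; rfl
  | neg φ ih => intro w a ha; exact not_congr (ih w a ha)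
  | and φ ψ ih ih' => intro w a ha; exact and_congr (ih w a ha) (ih' w a ha)
  | ex φ ih =>
    intro w a ha
    exact exists_congr fun b => and_congr_right fun hb => ih w b hb
  | box m φ ih =>
    intro w a ha
    exact forall_congr' fun v => forall_congr' fun hv => ih v a (𝔪.expand m w v hv ha)

theorem eval_fo {F : KFrame M} (𝔪 : KModel F) (φ : OV M) (hφ : φ.boxFree) (w : F.W) :
    ∀ a : 𝔪.dom w, (𝔪.eval φ w a ↔ clEval (𝔪.dom w) (fun n => {b | b.1 ∈ 𝔪.I w n}) φ a) := by
  induction φ with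
  | atom n => intro a; rfl
  | neg φ ih => intro a; exact not_congr (ih hφ a)
  | and φ ψ ih ih' => intro a; exact and_congr (ih hφ.1 a) (ih' hφ.2 a)
  | ex φ ih =>
    intro a
    constructor
    · rintro ⟨b, hb, h⟩
      exact ⟨⟨b, hb⟩, (ih hφ _).1 h⟩
    · rintro ⟨b, h⟩
      exact ⟨b.1, b.2, (ih hφ _).2 h⟩
  | box m φ ih => exact hφ.elim

theorem logF_isLogic (d : DSem) (F : KFrame M) : IsOVLogic (LogD d {F}) where
  fo := by
    rintro φ ⟨h1, h2⟩ _ rfl 𝔪 _ w a ha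
    exact (eval_fo 𝔪 φ h1 w ⟨a, ha⟩).2 (h2 _ _ _)
  kax := by
    rintro m n k _ rfl 𝔪 _ w a ha
    simp only [OV.imp, KModel.eval]
    rintro ⟨h1, h2⟩
    apply h2
    rintro ⟨h3, h4⟩
    apply h4
    intro v hv
    have := h1 v hv
    have := h3 v hv
    tauto
  mp := by
    rintro φ ψ h1 h2 _ rfl 𝔪 hd w a ha
    have h1 := h1 _ rfl 𝔪 hd w a ha
    have h2 := h2 _ rfl 𝔪 hd w a ha
    simp only [OV.imp, KModel.eval] at h1
    tauto
  gen := by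
    rintro φ h1 _ rfl 𝔪 hd w a ha
    rintro ⟨b, hb, h⟩
    exact h (h1 _ rfl 𝔪 hd w b hb)
  nec := by
    rintro m φ h1 _ rfl 𝔪 hd w a ha v hv
    exact h1 _ rfl 𝔪 hd v a (𝔪.expand m w v hv ha)
  subst := by
    rintro σ φ h _ rfl 𝔪 hd w a ha
    exact (eval_subst 𝔪 σ φ w a ha).2
      (h _ rfl { 𝔪 with I := fun w n => {a | 𝔪.eval (σ n) w a} } hd w a ha)

theorem GC_sound {L : Set (OV M)} {F : KFrame M} (𝔪 : KModel F)
    (hL : ∀ χ ∈ L, 𝔪.TrueIn χ) {φ ψ : OV M} (h : GlobalConseq L φ ψ) (hφ : 𝔪.TrueIn φ) :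
    𝔪.TrueIn ψ := by
  induction h with
  | ax h => exact hL _ h
  | prem => exact hφ
  | mp _ _ h1 h2 =>
    intro w a ha
    have h1 := h1 w a ha
    have h2 := h2 w a ha
    simp only [OV.imp, KModel.eval] at h1
    tauto
  | gen _ h =>
    rintro w a ha ⟨b, hb, hh⟩
    exact hh (h w b hb)
  | nec m _ h =>
    intro w a ha v hv
    exact h v a (𝔪.expand m w v hv ha)

/-- pull a model back along a p-isomorphism of a reduct -/
def KModel.trans {N : Type} {F : KFrame M} (𝔪 : KModel F) (G : KFrame N) (j : N → M)
    (e : F.W ≃ G.W) (he : ∀ m x y, G.R m (e x) (e y) ↔ F.R (j m) x y) : KModel G where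
  D := 𝔪.D
  dom w := 𝔪.dom (e.symm w)
  domNe w := 𝔪.domNe _
  expand m w v h := 𝔪.expand (j m) _ _ ((he m _ _).1 (by simpa using h))
  I w := 𝔪.I (e.symm w)

theorem eval_trans {N : Type} {F : KFrame M} (𝔪 : KModel F) (G : KFrame N) (j : N → M)
    (e : F.W ≃ G.W) (he : ∀ m x y, G.R m (e x) (e y) ↔ F.R (j m) x y) (φ : OV N) :
    ∀ w a, (𝔪.trans G j e he).eval φ (e w) a ↔ 𝔪.eval (φ.mapOp j) w a := by
  induction φ with
  | atom n => intro w a; simp [KModel.trans, KModel.eval, mapOp]; rfl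
  | neg φ ih => intro w a; exact not_congr (ih w a)
  | and φ ψ ih ih' => intro w a; exact and_congr (ih w a) (ih' w a)
  | ex φ ih =>
    intro w a
    refine exists_congr fun b => and_congr ?_ (ih w b)
    simp [KModel.trans]; rfl
  | box m φ ih =>
    intro w a
    constructor
    · intro h v hv
      exact (ih v a).1 (h (e v) ((he m _ _).2 hv))
    · intro h v hv
      obtain ⟨v, rfl⟩ := e.surjective v
      exact (ih v a).2 (h v ((he m _ _).1 hv))

theorem valid_trans {N : Type} {d : DSem} {L : Set (OV N)} {C : Set (KFrame N)}
    (hc : GloballyDComplete d L C) {F : KFrame M} (G : KFrame N) (hG : G ∈ C) (j : N → M)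
    (e : F.W ≃ G.W) (he : ∀ m x y, G.R m (e x) (e y) ↔ F.R (j m) x y) :
    OV.mapOp j '' L ⊆ LogD d {F} := by
  rintro _ ⟨φ, hφ, rfl⟩ _ rfl 𝔪 hd w a ha
  refine (eval_trans 𝔪 G j e he φ w a).1 ?_
  refine (hc (ovOps N).tp φ).1 (.ax hφ) G hG (𝔪.trans G j e he) (fun h w => hd h _) ?_ (e w) a ?_
  · intro w a ha
    simp [ovOps, KModel.eval]
  · have : e.symm (e w) = w := by simp
    change a ∈ 𝔪.dom (e.symm (e w))
    rw [this]; exact ha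

theorem glue {d : DSem} {C1 : Set (KFrame M1)} {C2 : Set (KFrame M2)}
    {L1 : Set (OV M1)} {L2 : Set (OV M2)}
    (hc1 : GloballyDComplete d L1 C1) (hc2 : GloballyDComplete d L2 C2)
    {Θ : Set (OV (M1 ⊕ M2))} (hΘ : SubCl Θ) {K : Type}
    {G1 : KFrame M1} {G2 : KFrame M2} (hG1 : G1 ∈ C1) (hG2 : G2 ∈ C2)
    {s1 : G1.W → K → Option (Set (OV (M1 ⊕ M2)))} {s2 : G2.W → K → Option (Set (OV (M1 ⊕ M2)))}
    (S1 : Side d Θ Sum.inl G1 K s1) (S2 : Side d Θ Sum.inr G2 K s2)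
    (e : G1.W ≃ G2.W) (he : ∀ x, s2 (e x) = s1 x)
    {φ ψ : OV (M1 ⊕ M2)} (hφ : φ ∈ Θ) (hψ : ψ ∈ Θ)
    (hφs : ∀ x k t, s1 x k = some t → φ ∈ t)
    (hψs : ∃ x k t, s1 x k = some t ∧ ψ ∉ t) :
    ¬ GlobalConseq (fusion L1 L2) φ ψ := by
  intro hGC
  let F : KFrame (M1 ⊕ M2) := ⟨G1.W, G1.ne, fun m x y => match m with
    | .inl m => G1.R m x y
    | .inr m => G2.R m (e x) (e y)⟩
  let 𝔪 : KModel F := {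
    D := K
    dom := fun x => {k | (s1 x k).isSome}
    domNe := fun x => S1.ne x
    expand := by
      rintro (m | m) w v h k hk
      · exact S1.expand m w v k h hk
      · have := S2.expand m (e w) (e v) k h
        rw [he, he] at this
        exact this hk
    I := fun x n => {k | ∃ t, s1 x k = some t ∧ OV.atom n ∈ t} }
  have hd : 𝔪.IsD d := fun h w => Set.eq_univ_of_forall fun k => S1.cd h w k
  have hfus : fusion L1 L2 ⊆ LogD d {F} := by
    intro χ hχ
    exact hχ _ ⟨logF_isLogic d F, valid_trans hc1 (F := F) G1 hG1 Sum.inl (Equiv.refl _) (fun m x y => Iff.rfl),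
      valid_trans hc2 (F := F) G2 hG2 Sum.inr e (fun m x y => Iff.rfl)⟩
  have key : ∀ χ ∈ Θ, ∀ (x : G1.W) k t, s1 x k = some t → (𝔪.eval χ x k ↔ χ ∈ t) := by
    intro χ
    induction χ with
    | atom n =>
      intro _ x k t ht
      simp [KModel.eval, 𝔪, ht]
    | neg χ ih =>
      intro h x k t ht
      rw [S1.neg x k t χ h ht, ← ih (hΘ.neg _ h) x k t ht]; rfl
    | and χ χ' ih ih' =>
      intro h x k t ht
      rw [S1.and x k t χ χ' h ht, ← ih (hΘ.and1 _ _ h) x k t ht, ← ih' (hΘ.and2 _ _ h) x k t ht]; rfl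
    | ex χ ih =>
      intro h x k t ht
      rw [S1.ex x k t χ h ht]
      constructor
      · rintro ⟨b, hb, hbe⟩
        obtain ⟨t', ht'⟩ := Option.isSome_iff_exists.1 hb
        exact ⟨b, t', ht', (ih (hΘ.ex _ h) x b t' ht').1 hbe⟩
      · rintro ⟨b, t', ht', hb⟩
        exact ⟨b, Option.isSome_iff_exists.2 ⟨_, ht'⟩, (ih (hΘ.ex _ h) x b t' ht').2 hb⟩
    | box m χ ih =>
      intro h x k t ht
      have hk : k ∈ 𝔪.dom x := Option.isSome_iff_exists.2 ⟨_, ht⟩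
      have main : (∀ y, F.R m x y → ∃ t', s1 y k = some t' ∧ χ ∈ t') ↔ 𝔪.eval (.box m χ) x k := by
        constructor
        · intro hh y hy
          obtain ⟨t', ht', hχ⟩ := hh y hy
          exact (ih (hΘ.box _ _ h) y k t' ht').2 hχ
        · intro hh y hy
          have := 𝔪.expand m x y hy hk
          obtain ⟨t', ht'⟩ := Option.isSome_iff_exists.1 this
          exact ⟨t', ht', (ih (hΘ.box _ _ h) y k t' ht').1 (hh y hy)⟩
      rw [← main]
      rcases m with m | m
      · rw [S1.box x k t m χ h ht]
      · rw [S2.box (e x) k t m χ h (by rw [he]; exact ht)]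
        constructor
        · intro hh y hy
          obtain ⟨y, rfl⟩ := e.surjective y
          rw [he]
          exact hh y hy
        · intro hh y hy
          rw [← he]
          exact hh _ hy
  obtain ⟨x, k, t, ht, hψt⟩ := hψs
  apply hψt
  rw [← key ψ hψ x k t ht]
  refine GC_sound 𝔪 (fun χ hχ => hfus hχ F rfl 𝔪 hd) hGC ?_ x k (Option.isSome_iff_exists.2 ⟨_, ht⟩)
  intro w a ha
  obtain ⟨t', ht'⟩ := Option.isSome_iff_exists.1 ha
  exact (key φ hφ w a t' ht').2 (hφs w a t' ht')

end glue

section states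
variable {M N : Type}

structure RedHom (j : N → M) (r : OV M → OV N) : Prop where
  neg : ∀ χ, r (.neg χ) = .neg (r χ)
  and : ∀ χ χ', r (.and χ χ') = .and (r χ) (r χ')
  ex : ∀ χ, r (.ex χ) = .ex (r χ)
  box : ∀ m χ, r (.box (j m) χ) = .box m (r χ)

open Classical in
noncomputable def stt {F : KFrame N} (𝔪 : KModel F) (r : OV M → OV N) (Θ : List (OV M)) (d : DSem)
    (w : F.W) : 𝔪.D ⊕ PLift (d = DSem.xd) → Option (Set (OV M))
  | .inl a => if a ∈ 𝔪.dom w then some {χ | χ ∈ Θ ∧ 𝔪.eval (r χ) w a} else none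
  | .inr _ => none

theorem stt_some {F : KFrame N} {𝔪 : KModel F} {r : OV M → OV N} {Θ : List (OV M)} {d : DSem}
    {w : F.W} {x t} : stt 𝔪 r Θ d w x = some t ↔
      ∃ a, x = .inl a ∧ a ∈ 𝔪.dom w ∧ t = {χ | χ ∈ Θ ∧ 𝔪.eval (r χ) w a} := by
  rcases x with a | a
  · by_cases h : a ∈ 𝔪.dom w <;> simp [stt, h, eq_comm]
  · simp [stt]

theorem side_of_family {j : N → M} {r : OV M → OV N} (hr : RedHom j r) (d : DSem)
    (Θ : List (OV M)) (hΘ : SubCl {χ | χ ∈ Θ}) {ι : Type} (hι : Nonempty ι) (Fs : ι → KFrame N)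
    (ms : ∀ i, KModel (Fs i)) (hd : ∀ i, (ms i).IsD d) (K : Type)
    (π : ∀ i, K → (ms i).D ⊕ PLift (d = DSem.xd)) (hπ : ∀ i, Function.Surjective (π i)) :
    Side d {χ | χ ∈ Θ} j (KFrame.disjUnion hι Fs) K
      (fun x k => stt (ms x.1) r Θ d x.2 (π x.1 k)) where
  neg := by
    rintro ⟨i, w⟩ k t χ hχ ht
    obtain ⟨a, ha, hw, rfl⟩ := stt_some.1 ht
    have h1 := hΘ.neg _ hχ
    simp only [Set.mem_ofPred_eq] at hχ h1 ⊢
    simp [hχ, h1, hr.neg, KModel.eval]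
  and := by
    rintro ⟨i, w⟩ k t χ χ' hχ ht
    obtain ⟨a, ha, hw, rfl⟩ := stt_some.1 ht
    have h1 := hΘ.and1 _ _ hχ
    have h2 := hΘ.and2 _ _ hχ
    simp only [Set.mem_ofPred_eq] at hχ h1 h2 ⊢
    simp [hχ, h1, h2, hr.and, KModel.eval]
  ex := by
    rintro ⟨i, w⟩ k t χ hχ ht
    obtain ⟨a, ha, hw, rfl⟩ := stt_some.1 ht
    have h1 := hΘ.ex _ hχ
    simp only [Set.mem_ofPred_eq] at hχ h1 ⊢
    simp only [hχ, hr.ex, KModel.eval, true_and]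
    constructor
    · rintro ⟨b, hb, hbe⟩
      obtain ⟨k', hk'⟩ := hπ i (.inl b)
      exact ⟨k', _, stt_some.2 ⟨b, hk', hb, rfl⟩, h1, hbe⟩
    · rintro ⟨k', t', ht', hχt⟩
      obtain ⟨b, hb, hbw, rfl⟩ := stt_some.1 ht'
      exact ⟨b, hbw, hχt.2⟩
  box := by
    rintro ⟨i, w⟩ k t m χ hχ ht
    obtain ⟨a, ha, hw, rfl⟩ := stt_some.1 ht
    have h1 := hΘ.box _ _ hχ
    simp only [Set.mem_ofPred_eq] at hχ h1 ⊢
    simp only [hχ, hr.box, KModel.eval, true_and]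
    constructor
    · rintro h y ⟨i', w', v', hR, h2, rfl⟩
      cases h2
      exact ⟨_, stt_some.2 ⟨a, ha, (ms i).expand m w v' hR hw, rfl⟩, h1, h v' hR⟩
    · intro h v hv
      obtain ⟨t', ht', hχ'⟩ := h ⟨i, v⟩ ⟨i, w, v, hv, rfl, rfl⟩
      obtain ⟨b, hb, hbw, rfl⟩ := stt_some.1 ht'
      have : a = b := Sum.inl_injective (ha.symm.trans hb)
      subst this
      exact hχ'.2
  expand := by
    rintro m ⟨i, w⟩ y k ⟨i', w', v', hR, h2, rfl⟩ hk
    cases h2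
    obtain ⟨t, ht⟩ := Option.isSome_iff_exists.1 hk
    obtain ⟨a, ha, hw, rfl⟩ := stt_some.1 ht
    exact Option.isSome_iff_exists.2 ⟨_, stt_some.2 ⟨a, ha, (ms i).expand m w v' hR hw, rfl⟩⟩
  ne := by
    rintro ⟨i, w⟩
    obtain ⟨a, ha⟩ := (ms i).domNe w
    obtain ⟨k, hk⟩ := hπ i (.inl a)
    exact ⟨k, Option.isSome_iff_exists.2 ⟨_, stt_some.2 ⟨a, hk, ha, rfl⟩⟩⟩
  cd := by
    rintro rfl ⟨i, w⟩ k
    rcases h : π i k with a | a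
    · exact Option.isSome_iff_exists.2 ⟨_, stt_some.2 ⟨a, rfl, by rw [hd i rfl]; trivial, rfl⟩⟩
    · exact absurd a.down (by simp)

theorem redVal {j : N → M} {r : OV M → OV N} (hr : RedHom j r) {F : KFrame N} (𝔪 : KModel F)
    (w : F.W) (a : 𝔪.D) : IsVal (fun χ => 𝔪.eval (r χ) w a) :=
  ⟨fun χ => by simp [hr.neg, KModel.eval], fun χ χ' => by simp [hr.and, KModel.eval]⟩

theorem stt_range {N' : Type} {j : N → M} {r : OV M → OV N} (hr : RedHom j r)
    {j' : N' → M} {r' : OV M → OV N'} (hr' : RedHom j' r')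
    {F : KFrame N} (𝔪 : KModel F) {F' : KFrame N'} (𝔪' : KModel F') {d : DSem}
    (hd : 𝔪.IsD d) (Θ : List (OV M)) (w : F.W) (w' : F'.W)
    (a : 𝔪.D) (a' : 𝔪'.D) (q : OV M) (hq : q ∈ (ovOps M).wt Θ)
    (h : 𝔪.eval (r q) w a) (h' : 𝔪'.eval (r' q) w' a') :
    Set.range (stt 𝔪 r Θ d w) ⊆ Set.range (stt 𝔪' r' Θ d w') := by
  rintro _ ⟨x, rfl⟩
  rcases hx : stt 𝔪 r Θ d w x with _ | t
  · rcases x with b | p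
    · have hb : b ∉ 𝔪.dom w := by
        intro hb
        simp [stt, hb] at hx
      have : d = DSem.xd := by
        cases d with
        | xd => rfl
        | cd => exact absurd (by rw [hd rfl]; trivial) hb
      exact ⟨.inr ⟨this⟩, rfl⟩
    · exact ⟨.inr p, rfl⟩
  · obtain ⟨b, rfl, hb, rfl⟩ := stt_some.1 hx
    obtain ⟨u, hu, hub⟩ := (redVal hr 𝔪 w b).ty_exists Θ
    have hm := (redVal hr 𝔪 w a).ty_match (redVal hr' 𝔪' w' a') _ q hq h h' (.ex u)
      (List.mem_map.2 ⟨u, hu, rfl⟩)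
    simp only [hr.ex, hr'.ex, KModel.eval] at hm
    obtain ⟨b', hb', hub'⟩ := hm.1 ⟨b, hb, hub⟩
    refine ⟨.inl b', stt_some.2 ⟨b', rfl, hb', ?_⟩⟩
    ext χ
    simp only [Set.mem_ofPred_eq]
    refine and_congr_right fun hχ => ?_
    exact (redVal hr 𝔪 w b).ty_match (redVal hr' 𝔪' w' b') _ u hu hub hub' χ hχ

end states
end OneVarML

namespace OneVarML
open OV Cardinal

theorem lift_big {K X Y : Type} [Infinite K] (hX : #X ≤ #K) (s : K → Y) (g : X → Y)
    (hs : ∀ k, #K ≤ #{k' // s k' = s k}) (hr : Set.range g = Set.range s) :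
    ∃ π : K → X, (∀ k, g (π k) = s k) ∧ ∀ x, #K ≤ #{k // π k = x} := by
  have hK : ℵ₀ ≤ #K := Cardinal.aleph0_le_mk K
  have E : ∀ y : Set.range s, Nonempty ({k // s k = y.1} ≃ {x // g x = y.1} × K) := by
    rintro ⟨_, k, rfl⟩
    rw [← Cardinal.eq, Cardinal.mk_prod, Cardinal.lift_id, Cardinal.lift_id]
    have h1 : #{k' // s k' = s k} = #K := le_antisymm (Cardinal.mk_subtype_le _) (hs k)
    have hne : Nonempty {x // g x = s k} := by
      have : s k ∈ Set.range g := by rw [hr]; exact ⟨k, rfl⟩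
      obtain ⟨x, hx⟩ := this
      exact ⟨⟨x, hx⟩⟩
    rw [h1, Cardinal.mul_eq_right hK ((Cardinal.mk_subtype_le _).trans hX)
      (Cardinal.mk_ne_zero_iff.2 hne)]
  replace E := fun y => Classical.choice (E y)
  refine ⟨fun k => (E ⟨s k, k, rfl⟩ ⟨k, rfl⟩).1.1, fun k => (E ⟨s k, k, rfl⟩ ⟨k, rfl⟩).1.2, ?_⟩
  intro x
  have hx : g x ∈ Set.range s := by rw [← hr]; exact ⟨x, rfl⟩
  let f : K → {k // s k = g x} := fun k => (E ⟨g x, hx⟩).symm (⟨x, rfl⟩, k)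
  have hf : ∀ k, (E ⟨s (f k).1, _, rfl⟩ ⟨(f k).1, rfl⟩).1.1 = x := by
    intro k
    have gen : ∀ (z : {k // s k = g x}), (E ⟨s z.1, _, rfl⟩ ⟨z.1, rfl⟩).1.1 =
        (E ⟨g x, hx⟩ z).1.1 := by
      rintro ⟨z, hz⟩
      have : ∀ (y : Y) (hy : y ∈ Set.range s) (hzy : s z = y),
          (E ⟨s z, _, rfl⟩ ⟨z, rfl⟩).1.1 = (E ⟨y, hy⟩ ⟨z, hzy⟩).1.1 := by
        rintro y hy rfl
        rfl
      exact this _ hx hz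
    rw [gen]
    simp [f]
  refine Cardinal.mk_le_of_injective (f := fun k => ⟨(f k).1, hf k⟩) ?_
  intro a b hab
  have h1 : f a = f b := Subtype.ext (by simpa using hab)
  simpa [f] using h1

theorem big_surj {K X : Type} [Infinite K] {π : K → X} (h : ∀ x, #K ≤ #{k // π k = x}) :
    Function.Surjective π := by
  intro x
  have : #{k // π k = x} ≠ 0 := by
    intro h0
    have := h x
    rw [h0] at this
    exact Cardinal.mk_ne_zero K (le_antisymm this zero_le)
  obtain ⟨k, hk⟩ := Cardinal.mk_ne_zero_iff.1 this
  exact ⟨k, hk⟩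

theorem big_comp {K X Y : Type} {π : K → X} (h : ∀ x, #K ≤ #{k // π k = x}) (g : X → Y) (k : K) :
    #K ≤ #{k' // g (π k') = g (π k)} := by
  refine (h (π k)).trans ?_
  exact Cardinal.mk_subtype_mono (fun k' hk' => by rw [hk'])

theorem equiv_of_states {V1 V2 Y : Type} (K : Type) (s1 : V1 → Y) (s2 : V2 → Y)
    (h1 : #V1 ≤ #K) (h2 : #V2 ≤ #K)
    (b1 : ∀ v, #K ≤ #{v' // s1 v' = s1 v}) (b2 : ∀ v, #K ≤ #{v' // s2 v' = s2 v})
    (hr : Set.range s1 = Set.range s2) : ∃ e : V1 ≃ V2, ∀ x, s2 (e x) = s1 x := by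
  have E : ∀ y : Y, Nonempty ({v // s1 v = y} ≃ {v // s2 v = y}) := by
    intro y
    by_cases hy : y ∈ Set.range s1
    · rw [← Cardinal.eq]
      have hy2 := hy
      rw [hr] at hy2
      obtain ⟨v1, rfl⟩ := hy
      obtain ⟨v2, hv2⟩ := hy2
      have e1 := le_antisymm ((Cardinal.mk_subtype_le _).trans h1) (b1 v1)
      have e2 := le_antisymm ((Cardinal.mk_subtype_le _).trans h2) (b2 v2)
      rw [hv2] at e2
      rw [e1, e2]
    · have hy2 := hy
      rw [hr] at hy2
      have : IsEmpty {v // s1 v = y} := ⟨fun v => hy ⟨v.1, v.2⟩⟩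
      have : IsEmpty {v // s2 v = y} := ⟨fun v => hy2 ⟨v.1, v.2⟩⟩
      exact ⟨Equiv.equivOfIsEmpty _ _⟩
  replace E := fun y => Classical.choice (E y)
  exact ⟨Equiv.ofFiberEquiv E, fun x => Equiv.ofFiberEquiv_map E x⟩

section assemble
variable {M N : Type}

/-- a family of models indexed by `ι`, each of which realises its world type, and all whose
worlds realise world types in `ι`. -/
structure Fam (d : DSem) (r : OV M → OV N) (C : Set (KFrame N)) (φ : OV M) (S : List (OV M)) where
  F : {q // q ∈ S} → KFrame N
  FC : ∀ q, F q ∈ C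
  m : ∀ q, KModel (F q)
  hd : ∀ q, (m q).IsD d
  w0 : ∀ q, (F q).W
  a0 : ∀ q, (m q).D
  h0 : ∀ q, (m q).eval (r q.1) (w0 q) (a0 q)
  all : ∀ q, ∀ w, ∃ a q', q' ∈ S ∧ (m q).eval (r q') w a
  prem : ∀ q w, ∀ a ∈ (m q).dom w, (m q).eval (r φ) w a

theorem fam_exists {d : DSem} {j : N → M} {r : OV M → OV N} (hr : RedHom j r)
    {C : Set (KFrame N)} {L : Set (OV N)} (hc : GloballyDComplete d L C) {φ : OV M}
    {S : List (OV M)}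
    (h : ∀ q ∈ S, ¬ GlobalConseq L (r (.and φ ((ovOps _).dj S))) (r (.neg q))) :
    Nonempty (Fam d r C φ S) := by
  have H : ∀ q : {q // q ∈ S}, ∃ (F : KFrame N) (_ : F ∈ C) (m : KModel F) (_ : m.IsD d)
      (w0 : F.W) (a0 : m.D), m.eval (r q.1) w0 a0 ∧
      (∀ w, ∃ a q', q' ∈ S ∧ m.eval (r q') w a) ∧ (∀ w, ∀ a ∈ m.dom w, m.eval (r φ) w a) := by
    intro q
    have := h q.1 q.2
    rw [hc] at this
    push Not at this
    obtain ⟨F, hF, m, hd, hp, hn⟩ := this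
    simp only [KModel.TrueIn, KModel.TrueAt, not_forall] at hn
    obtain ⟨w, a, ha, hn⟩ := hn
    have hp' : ∀ w, ∀ a ∈ m.dom w, m.eval (r φ) w a ∧ m.eval (r ((ovOps _).dj S)) w a := by
      intro w a ha
      have := hp w a ha
      rw [hr.and] at this
      exact this
    refine ⟨F, hF, m, hd, w, a, ?_, ?_, fun w a ha => (hp' w a ha).1⟩
    · rw [hr.neg] at hn
      exact not_not.1 hn
    · intro w
      obtain ⟨a, ha⟩ := m.domNe w
      obtain ⟨q', hq', h'⟩ := ((redVal hr m w a).dj S).1 (hp' w a ha).2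
      exact ⟨a, q', hq', h'⟩
  choose F FC m hd w0 a0 h0 all prem using H
  exact ⟨⟨F, FC, m, hd, w0, a0, h0, all, prem⟩⟩

namespace Fam
variable {d : DSem} {r : OV M → OV N} {C : Set (KFrame N)} {φ : OV M} {S : List (OV M)}

abbrev X (A : Fam d r C φ S) (q : {q // q ∈ S}) : Type := (A.m q).D ⊕ PLift (d = DSem.xd)

abbrev J (A : Fam d r C φ S) (K : Type) : Type :=
  Σ q, {π : K → A.X q // ∀ x, #K ≤ #{k // π k = x}}

abbrev V (A : Fam d r C φ S) (K : Type) : Type := Σ i : A.J K, (A.F i.1).W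

abbrev V' (A : Fam d r C φ S) (K K' : Type) : Type := Σ i : A.J K × K', (A.F i.1.1).W

noncomputable def st (A : Fam d r C φ S) (Θ : List (OV M)) (K K' : Type) (x : A.V' K K') (k : K) :
    Option (Set (OV M)) := stt (A.m x.1.1.1) r Θ d x.2 (x.1.1.2.1 k)

theorem V'_card (A : Fam d r C φ S) (K K' : Type) [Infinite K'] (h : #(A.V K) ≤ #K') :
    #(A.V' K K') ≤ #K' := by
  have : #(A.V' K K') ≤ #(A.V K × K') := by
    refine Cardinal.mk_le_of_injective (f := fun x => (⟨x.1.1, x.2⟩, x.1.2)) ?_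
    rintro ⟨⟨i, k⟩, w⟩ ⟨⟨i', k'⟩, w'⟩ h
    simp only [Prod.mk.injEq, Sigma.mk.injEq] at h
    obtain ⟨⟨rfl, h⟩, rfl⟩ := h
    cases h
    rfl
  refine this.trans ?_
  rw [Cardinal.mk_prod, Cardinal.lift_id, Cardinal.lift_id]
  exact Cardinal.mul_le_of_le (Cardinal.aleph0_le_mk K') h le_rfl

theorem st_big (A : Fam d r C φ S) (Θ : List (OV M)) (K K' : Type) (x : A.V' K K') :
    #K' ≤ #{x' // A.st Θ K K' x' = A.st Θ K K' x} := by
  refine Cardinal.mk_le_of_injective (f := fun k' => ⟨⟨(x.1.1, k'), x.2⟩, rfl⟩) ?_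
  intro a b h
  have h := congrArg (fun z => z.1.1.2) h
  exact h

theorem st_range_sub {N' : Type} {j : N → M} (hr : RedHom j r) {j' : N' → M} {r' : OV M → OV N'}
    (hr' : RedHom j' r') {C' : Set (KFrame N')} (A : Fam d r C φ S) (A' : Fam d r' C' φ S)
    (Θ : List (OV M)) (hS : S ⊆ (ovOps M).wt Θ)
    (K K' : Type) [Infinite K] (hX' : ∀ q, #(A'.X q) ≤ #K) :
    Set.range (A.st Θ K K') ⊆ Set.range (A'.st Θ K K') := by
  rintro _ ⟨⟨⟨⟨q, π⟩, k'⟩, w⟩, rfl⟩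
  obtain ⟨a, q', hq', ha⟩ := A.all q w
  have R1 := stt_range hr hr' (A.m q) (A'.m ⟨q', hq'⟩) (A.hd q) Θ w (A'.w0 ⟨q', hq'⟩) a
    (A'.a0 _) q' (hS hq') ha (A'.h0 _)
  have R2 := stt_range hr' hr (A'.m ⟨q', hq'⟩) (A.m q) (A'.hd _) Θ (A'.w0 ⟨q', hq'⟩) w
    (A'.a0 _) a q' (hS hq') (A'.h0 _) ha
  obtain ⟨π', h1, h2⟩ := lift_big (hX' ⟨q', hq'⟩)
    (fun k => stt (A.m q) r Θ d w (π.1 k)) (stt (A'.m ⟨q', hq'⟩) r' Θ d (A'.w0 ⟨q', hq'⟩))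
    (big_comp π.2 _) (by
      rw [show (fun k => stt (A.m q) r Θ d w (π.1 k)) = stt (A.m q) r Θ d w ∘ π.1 from rfl,
        Function.Surjective.range_comp (big_surj π.2)]
      exact R2.antisymm R1)
  exact ⟨⟨⟨⟨⟨q', hq'⟩, π', h2⟩, k'⟩, A'.w0 _⟩, funext h1⟩

theorem J_ne (A : Fam d r C φ S) (K : Type) [Infinite K] (hX : ∀ q, #(A.X q) ≤ #K)
    (q : {q // q ∈ S}) : ∃ π : K → A.X q, ∀ x, #K ≤ #{k // π k = x} := by
  obtain ⟨π, _, h⟩ := lift_big (hX q) (fun _ : K => ()) (fun _ => ()) (by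
    intro k
    exact Cardinal.mk_le_of_injective (f := fun k => ⟨k, rfl⟩) (fun a b h => by simpa using h)) (by
    have : Nonempty (A.X q) := ⟨.inl (A.a0 q)⟩
    ext; simp)
  exact ⟨π, h⟩

end Fam

variable {M1 M2 : Type}

theorem red1_hom (c : OV (M1 ⊕ M2) → ℕ) : RedHom Sum.inl (red1 c) :=
  ⟨fun _ => by simp [red1], fun _ _ => by simp [red1], fun _ => by simp [red1],
    fun _ _ => by simp [red1]⟩

theorem red2_hom (c : OV (M1 ⊕ M2) → ℕ) : RedHom Sum.inr (red2 c) :=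
  ⟨fun _ => by simp [red2], fun _ _ => by simp [red2], fun _ => by simp [red2],
    fun _ _ => by simp [red2]⟩

theorem not_of_cert (d : DSem) (c : OV (M1 ⊕ M2) → ℕ)
    {C1 : Set (KFrame M1)} {C2 : Set (KFrame M2)}
    (hdu1 : ClosedDU C1) (hdu2 : ClosedDU C2)
    {L1 : Set (OV M1)} {L2 : Set (OV M2)}
    (hc1 : GloballyDComplete d L1 C1) (hc2 : GloballyDComplete d L2 C2)
    (φ ψ : OV (M1 ⊕ M2)) (Θ : List (OV (M1 ⊕ M2))) (hΘ : SubCl {χ | χ ∈ Θ})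
    (hφ : φ ∈ Θ) (hψ : ψ ∈ Θ) (S : List (OV (M1 ⊕ M2))) (hS : S ⊆ (ovOps _).wt Θ)
    (h : Cert c L1 L2 φ ψ S) : ¬ GlobalConseq (fusion L1 L2) φ ψ := by
  obtain ⟨hp, hq⟩ := h
  have hr1 := red1_hom c
  have hr2 := red2_hom c
  obtain ⟨A1⟩ := fam_exists hr1 hc1 (fun q h => (hq q h).1)
  obtain ⟨A2⟩ := fam_exists hr2 hc2 (fun q h => (hq q h).2)
  let K := ℕ ⊕ (Σ q, A1.X q) ⊕ (Σ q, A2.X q)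
  have hX1 : ∀ q, #(A1.X q) ≤ #K := fun q =>
    Cardinal.mk_le_of_injective (f := fun x => Sum.inr (Sum.inl ⟨q, x⟩)) (fun a b h => by cases h; rfl)
  have hX2 : ∀ q, #(A2.X q) ≤ #K := fun q =>
    Cardinal.mk_le_of_injective (f := fun x => Sum.inr (Sum.inr ⟨q, x⟩)) (fun a b h => by cases h; rfl)
  let K' := ℕ ⊕ A1.V K ⊕ A2.V K
  have hV1 : #(A1.V K) ≤ #K' :=
    Cardinal.mk_le_of_injective (f := fun x => Sum.inr (Sum.inl x)) (fun a b h => by cases h; rfl)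
  have hV2 : #(A2.V K) ≤ #K' :=
    Cardinal.mk_le_of_injective (f := fun x => Sum.inr (Sum.inr x)) (fun a b h => by cases h; rfl)
  -- the world refuting psi
  rw [hc1] at hp
  push Not at hp
  obtain ⟨F, hF, m, hd, hpr, hn⟩ := hp
  simp only [KModel.TrueIn, KModel.TrueAt, not_forall] at hn
  obtain ⟨w, a, ha, hn⟩ := hn
  have hpr := hpr w a ha
  rw [hr1.and] at hpr
  obtain ⟨q, hqS, hqa⟩ := ((redVal hr1 m w a).dj S).1 hpr.2
  obtain ⟨π1, hπ1⟩ := A1.J_ne K hX1 ⟨q, hqS⟩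
  obtain ⟨π2, hπ2⟩ := A2.J_ne K hX2 ⟨q, hqS⟩
  have ne1 : Nonempty (A1.J K × K') := ⟨⟨⟨q, hqS⟩, π1, hπ1⟩, .inl 0⟩
  have ne2 : Nonempty (A2.J K × K') := ⟨⟨⟨q, hqS⟩, π2, hπ2⟩, .inl 0⟩
  obtain ⟨e, he⟩ := equiv_of_states K' (A1.st Θ K K') (A2.st Θ K K')
    (A1.V'_card K K' hV1) (A2.V'_card K K' hV2) (A1.st_big Θ K K') (A2.st_big Θ K K')
    ((Fam.st_range_sub hr1 hr2 A1 A2 Θ hS K K' hX2).antisymm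
      (Fam.st_range_sub hr2 hr1 A2 A1 Θ hS K K' hX1))
  have S1 := side_of_family hr1 d Θ hΘ ne1 (fun i => A1.F i.1.1) (fun i => A1.m i.1.1)
    (fun i => A1.hd i.1.1) K (fun i => i.1.2.1) (fun i => big_surj i.1.2.2)
  have S2 := side_of_family hr2 d Θ hΘ ne2 (fun i => A2.F i.1.1) (fun i => A2.m i.1.1)
    (fun i => A2.hd i.1.1) K (fun i => i.1.2.1) (fun i => big_surj i.1.2.2)
  refine glue hc1 hc2 hΘ (hdu1 _ ne1 _ (fun i => A1.FC i.1.1)) (hdu2 _ ne2 _ (fun i => A2.FC i.1.1))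
    S1 S2 e he hφ hψ ?_ ?_
  · rintro ⟨i, w⟩ k t ht
    obtain ⟨a, _, hw, rfl⟩ := stt_some.1 ht
    exact ⟨hφ, A1.prem _ _ _ hw⟩
  · have := stt_range hr1 hr1 m (A1.m ⟨q, hqS⟩) hd Θ w (A1.w0 ⟨q, hqS⟩) a (A1.a0 _) q (hS hqS) hqa
      (A1.h0 _) ⟨.inl a, rfl⟩
    obtain ⟨x, hx⟩ := this
    obtain ⟨k, rfl⟩ := big_surj hπ1 x
    refine ⟨⟨(⟨⟨q, hqS⟩, π1, hπ1⟩, .inl 0), A1.w0 ⟨q, hqS⟩⟩, k, _,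
      hx.trans (stt_some.2 ⟨a, rfl, ha, rfl⟩), fun h => hn h.2⟩

end assemble
end OneVarML

namespace OneVarML
open OV

section comp

theorem comp_any {α β : Type} [Primcodable α] [Primcodable β] {g : α → List β} {f : α → β → Bool}
    (hg : Computable g) (hf : Computable₂ f) : Computable fun a => (g a).any (f a) := by
  have key : ∀ (l : List β) (h : β → Bool) (n : ℕ),
      (Nat.rec false (fun i acc => acc || ((l[i]?).map h).getD false) n : Bool) =
        (l.take n).any h := by
    intro l h n
    induction n with
    | zero => simp
    | succ n ih =>
      simp only [ih]
      rw [List.take_add_one, List.any_append]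
      cases l[n]? <;> simp
  have : Computable fun a => (Nat.rec false
      (fun i acc => acc || (((g a)[i]?).map (f a)).getD false) (g a).length : Bool) := by
    refine Computable.nat_rec (Computable.list_length.comp hg) (Computable.const false)
      (h := fun a (p : ℕ × Bool) => p.2 || (((g a)[p.1]?).map (f a)).getD false) ?_
    refine Primrec.or.to_comp.comp (Computable.snd.comp Computable.snd) ?_
    refine Computable.option_getD (Computable.option_map ?_ ?_) (Computable.const false)
    · exact Computable.list_getElem?.comp (hg.comp Computable.fst)
        (Computable.fst.comp Computable.snd)
    · exact hf.comp (Computable.fst.comp Computable.fst) Computable.snd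
  refine this.of_eq fun a => ?_
  rw [key, List.take_length]

def cOps : Ops (ℕ × ℕ) where
  ng p := (Nat.pair 1 p.1, Nat.pair 1 p.2)
  an p q := (Nat.pair 2 (Nat.pair p.1 q.1), Nat.pair 2 (Nat.pair p.2 q.2))
  ex p := (Nat.pair 3 p.1, Nat.pair 3 p.2)
  tp := (Nat.pair 1 (Nat.pair 2 (Nat.pair (Nat.pair 0 0) (Nat.pair 1 (Nat.pair 0 0)))),
    Nat.pair 1 (Nat.pair 2 (Nat.pair (Nat.pair 0 0) (Nat.pair 1 (Nat.pair 0 0)))))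

open Primrec in
theorem cOps_ng : Primrec cOps.ng :=
  Primrec.pair (Primrec₂.natPair.comp (const 1) fst) (Primrec₂.natPair.comp (const 1) snd)

open Primrec in
theorem cOps_ex : Primrec cOps.ex :=
  Primrec.pair (Primrec₂.natPair.comp (const 3) fst) (Primrec₂.natPair.comp (const 3) snd)

open Primrec in
theorem cOps_an : Primrec₂ cOps.an :=
  Primrec.pair
    (Primrec₂.natPair.comp (const 2) (Primrec₂.natPair.comp (fst.comp fst) (fst.comp snd)))
    (Primrec₂.natPair.comp (const 2) (Primrec₂.natPair.comp (snd.comp fst) (snd.comp snd)))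

open Primrec in
theorem cOps_ty : Primrec cOps.ty := by
  have : Primrec fun l : List (ℕ × ℕ) => l.foldr
      (fun u ts => ts.flatMap fun t => [cOps.an u t, cOps.an (cOps.ng u) t]) [cOps.tp] := by
    refine list_foldr (h := fun _ (p : (ℕ × ℕ) × List (ℕ × ℕ)) =>
      p.2.flatMap fun t => [cOps.an p.1 t, cOps.an (cOps.ng p.1) t]) Primrec.id (const _) ?_
    refine list_flatMap (snd.comp snd) ?_
    have h1 : Primrec fun x : (List (ℕ × ℕ) × (ℕ × ℕ) × List (ℕ × ℕ)) × ℕ × ℕ => x.1.2.1 :=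
      fst.comp (snd.comp fst)
    exact list_cons.comp (cOps_an.comp h1 snd)
      (list_cons.comp (cOps_an.comp (cOps_ng.comp h1) snd) (const []))
  refine this.of_eq fun l => ?_
  induction l with
  | nil => rfl
  | cons u l ih => simp only [List.foldr_cons, ih, Ops.ty]

open Primrec in
theorem cOps_wt : Primrec cOps.wt :=
  cOps_ty.comp (list_map cOps_ty (cOps_ex.comp snd).to₂)

open Primrec in
theorem cOps_dj : Primrec cOps.dj := by
  have : Primrec fun l : List (ℕ × ℕ) => l.foldr
      (fun u t => cOps.ng (cOps.an (cOps.ng u) (cOps.ng t))) (cOps.ng cOps.tp) := by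
    refine list_foldr (h := fun _ (p : (ℕ × ℕ) × (ℕ × ℕ)) =>
      cOps.ng (cOps.an (cOps.ng p.1) (cOps.ng p.2))) Primrec.id (const _) ?_
    exact cOps_ng.comp (cOps_an.comp (cOps_ng.comp (fst.comp snd)) (cOps_ng.comp (snd.comp snd)))
  refine this.of_eq fun l => ?_
  induction l with
  | nil => rfl
  | cons u l ih => simp only [List.foldr_cons, ih, Ops.dj]

open Primrec in
theorem subL_primrec : Primrec (subL : List (ℕ × ℕ) → _) := by
  have : Primrec fun l : List (ℕ × ℕ) => l.foldr
      (fun u (ts : List (List (ℕ × ℕ))) => ts.flatMap fun t => [t, u :: t]) [[]] := by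
    refine list_foldr (h := fun _ (p : (ℕ × ℕ) × List (List (ℕ × ℕ))) =>
      p.2.flatMap fun t => [t, p.1 :: t]) Primrec.id (const _) ?_
    refine list_flatMap (snd.comp snd) ?_
    have h1 : Primrec fun x : (List (ℕ × ℕ) × (ℕ × ℕ) × List (List (ℕ × ℕ))) × List (ℕ × ℕ) =>
      x.1.2.1 := fst.comp (snd.comp fst)
    exact list_cons.comp snd (list_cons.comp (list_cons.comp h1 snd) (const []))
  refine this.of_eq fun l => ?_
  induction l with
  | nil => rfl
  | cons u l ih => simp only [List.foldr_cons, ih, subL]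

def un (f : ℕ × ℕ → ℕ × ℕ) (l : List (ℕ × ℕ)) : List (ℕ × ℕ) :=
  (l.head?.map fun p => f p :: l).getD []

def bin (a b : List (ℕ × ℕ)) : List (ℕ × ℕ) :=
  (a.head?.bind fun p => b.head?.map fun q => cOps.an p q :: (a ++ b)).getD []

open Primrec in
theorem un_primrec {α : Type} [Primcodable α] {f : α → ℕ × ℕ → ℕ × ℕ} {l : α → List (ℕ × ℕ)}
    (hf : Primrec₂ f) (hl : Primrec l) : Primrec fun a => un (f a) (l a) :=
  option_getD.comp (option_map (list_head?.comp hl)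
    (list_cons.comp (hf.comp fst snd) (hl.comp fst)).to₂) (const [])

open Primrec in
theorem bin_primrec {α : Type} [Primcodable α] {k l : α → List (ℕ × ℕ)}
    (hk : Primrec k) (hl : Primrec l) : Primrec fun a => bin (k a) (l a) := by
  refine option_getD.comp (option_bind (list_head?.comp hk) (option_map (list_head?.comp (hl.comp fst))
    (list_cons.comp (cOps_an.comp (snd.comp fst) snd)
      (list_append.comp (hk.comp (fst.comp fst)) (hl.comp (fst.comp fst)))).to₂).to₂) (const [])

def step (A B : List ℕ) (l : List (List (ℕ × ℕ))) : List (ℕ × ℕ) :=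
  let n := l.length
  let t := n.unpair.1
  let x := n.unpair.2
  let y := x.unpair.1
  let z := x.unpair.2
  if t = 0 then [(Nat.pair 0 (2 * x), Nat.pair 0 (2 * x))]
  else if t = 1 then un cOps.ng (l.getD x [])
  else if t = 2 then bin (l.getD y []) (l.getD z [])
  else if t = 3 then un cOps.ex (l.getD x [])
  else if t = 4 then
    if y % 2 = 0 ∧ ∃ a ∈ A, a = y / 2 then
      un (fun p => (Nat.pair 4 (Nat.pair (y / 2) p.1), Nat.pair 0 (2 * n + 1))) (l.getD z [])
    else if y % 2 = 1 ∧ ∃ a ∈ B, a = y / 2 then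
      un (fun p => (Nat.pair 0 (2 * n + 1), Nat.pair 4 (Nat.pair (y / 2) p.2))) (l.getD z [])
    else []
  else []

open Primrec in
theorem step_primrec (A B : List ℕ) : Primrec (step A B) := by
  have hn : Primrec fun l : List (List (ℕ × ℕ)) => l.length := list_length
  have ht : Primrec fun l : List (List (ℕ × ℕ)) => l.length.unpair.1 := fst.comp (unpair.comp hn)
  have hx : Primrec fun l : List (List (ℕ × ℕ)) => l.length.unpair.2 := snd.comp (unpair.comp hn)
  have hy : Primrec fun l : List (List (ℕ × ℕ)) => l.length.unpair.2.unpair.1 :=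
    fst.comp (unpair.comp hx)
  have hz : Primrec fun l : List (List (ℕ × ℕ)) => l.length.unpair.2.unpair.2 :=
    snd.comp (unpair.comp hx)
  have gd : ∀ {f : List (List (ℕ × ℕ)) → ℕ}, Primrec f →
      Primrec fun l : List (List (ℕ × ℕ)) => l.getD (f l) [] :=
    fun hf => (list_getD []).comp Primrec.id hf
  have at0 : ∀ {f : List (List (ℕ × ℕ)) → ℕ}, Primrec f → Primrec fun l => Nat.pair 0 (f l) :=
    fun hf => Primrec₂.natPair.comp (const 0) hf
  have hs : Primrec fun l : List (List (ℕ × ℕ)) => 2 * l.length + 1 :=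
    nat_add.comp (nat_mul.comp (const 2) hn) (const 1)
  have hy2 : Primrec fun l : List (List (ℕ × ℕ)) => l.length.unpair.2.unpair.1 / 2 :=
    nat_div.comp hy (const 2)
  have hmem : ∀ A : List ℕ, PrimrecPred fun l : List (List (ℕ × ℕ)) =>
      ∃ a ∈ A, a = l.length.unpair.2.unpair.1 / 2 := fun A =>
    (PrimrecRel.exists_mem_list (R := fun a b : ℕ => a = b) Primrec.eq).comp (const A) hy2
  have heq : ∀ {f : List (List (ℕ × ℕ)) → ℕ} (k : ℕ), Primrec f → PrimrecPred fun l => f l = k :=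
    fun k hf => Primrec.eq.comp hf (const k)
  have hym := nat_mod.comp hy (const 2)
  unfold step
  refine ite (heq 0 ht) ?_ <| ite (heq 1 ht) ?_ <| ite (heq 2 ht) ?_ <| ite (heq 3 ht) ?_ <|
    ite (heq 4 ht) (ite ((heq 0 hym).and (hmem A)) ?_ (ite ((heq 1 hym).and (hmem B)) ?_ (const [])))
      (const [])
  · have := at0 (nat_mul.comp (const 2) hx)
    exact list_cons.comp (Primrec.pair this this) (const [])
  · exact un_primrec (cOps_ng.comp snd).to₂ (gd hx)
  · exact bin_primrec (gd hy) (gd hz)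
  · exact un_primrec (cOps_ex.comp snd).to₂ (gd hx)
  · refine un_primrec ?_ (gd hz)
    exact Primrec.pair (Primrec₂.natPair.comp (const 4)
      (Primrec₂.natPair.comp (hy2.comp fst) (fst.comp snd))) ((at0 hs).comp fst)
  · refine un_primrec ?_ (gd hz)
    exact Primrec.pair ((at0 hs).comp fst) (Primrec₂.natPair.comp (const 4)
      (Primrec₂.natPair.comp (hy2.comp fst) (snd.comp snd)))

def pre (A B : List ℕ) : ℕ → List (List (ℕ × ℕ))
  | 0 => []
  | n + 1 => pre A B n ++ [step A B (pre A B n)]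

def FF (A B : List ℕ) (n : ℕ) : List (ℕ × ℕ) := step A B (pre A B n)

open Primrec in
theorem FF_primrec (A B : List ℕ) : Primrec (FF A B) := by
  refine (step_primrec A B).comp ?_
  have : Primrec fun n : ℕ => (Nat.rec [] (fun _ l => l ++ [step A B l]) n : List (List (ℕ × ℕ))) := by
    refine nat_rec' (h := fun _ (p : ℕ × List (List (ℕ × ℕ))) => p.2 ++ [step A B p.2])
      Primrec.id (const []) ?_
    exact list_concat.comp (snd.comp snd) ((step_primrec A B).comp (snd.comp snd))
  refine this.of_eq fun n => ?_
  induction n with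
  | zero => rfl
  | succ n ih => simp only [ih, pre]

theorem pre_eq (A B : List ℕ) (n : ℕ) : pre A B n = (List.range n).map (FF A B) := by
  induction n with
  | zero => rfl
  | succ n ih =>
    rw [List.range_succ, List.map_append, ← ih]; rfl

theorem pre_length (A B : List ℕ) (n : ℕ) : (pre A B n).length = n := by simp [pre_eq]

theorem pre_getD (A B : List ℕ) {n k : ℕ} (h : k < n) : (pre A B n).getD k [] = FF A B k := by
  simp [pre_eq, List.getD, h]

theorem lt_pair {a b : ℕ} (h : 1 ≤ a) : b < Nat.pair a b := by
  unfold Nat.pair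
  split <;> nlinarith

variable (A B : List ℕ)

theorem FF_atom (k : ℕ) : FF A B (Nat.pair 0 k) = [(Nat.pair 0 (2 * k), Nat.pair 0 (2 * k))] := by
  simp [FF, step, pre_length]

theorem FF_neg (k : ℕ) : FF A B (Nat.pair 1 k) = un cOps.ng (FF A B k) := by
  have h : k < Nat.pair 1 k := lt_pair (by norm_num)
  rw [FF]
  simp only [step, pre_length, Nat.unpair_pair, pre_getD A B h]
  simp

theorem FF_ex (k : ℕ) : FF A B (Nat.pair 3 k) = un cOps.ex (FF A B k) := by
  have h : k < Nat.pair 3 k := lt_pair (by norm_num)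
  rw [FF]
  simp only [step, pre_length, Nat.unpair_pair, pre_getD A B h]
  simp

theorem FF_and (k l : ℕ) : FF A B (Nat.pair 2 (Nat.pair k l)) = bin (FF A B k) (FF A B l) := by
  have h : Nat.pair k l < Nat.pair 2 (Nat.pair k l) := lt_pair (by norm_num)
  have h1 := (Nat.left_le_pair k l).trans_lt h
  have h2 := (Nat.right_le_pair k l).trans_lt h
  rw [FF]
  simp only [step, pre_length, Nat.unpair_pair, pre_getD A B h1, pre_getD A B h2]
  simp

theorem FF_box (k l : ℕ) : FF A B (Nat.pair 4 (Nat.pair k l)) =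
    if k % 2 = 0 ∧ ∃ a ∈ A, a = k / 2 then
      un (fun p => (Nat.pair 4 (Nat.pair (k / 2) p.1),
        Nat.pair 0 (2 * (Nat.pair 4 (Nat.pair k l)) + 1))) (FF A B l)
    else if k % 2 = 1 ∧ ∃ a ∈ B, a = k / 2 then
      un (fun p => (Nat.pair 0 (2 * (Nat.pair 4 (Nat.pair k l)) + 1),
        Nat.pair 4 (Nat.pair (k / 2) p.2))) (FF A B l)
    else [] := by
  have h : Nat.pair k l < Nat.pair 4 (Nat.pair k l) := lt_pair (by norm_num)
  have h2 := (Nat.right_le_pair k l).trans_lt h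
  rw [FF]
  simp only [step, pre_length, Nat.unpair_pair, pre_getD A B h2]
  simp

theorem FF_else {t k : ℕ} (h : 5 ≤ t) : FF A B (Nat.pair t k) = [] := by
  rw [FF]
  simp only [step, pre_length, Nat.unpair_pair]
  simp [show t ≠ 0 by omega, show t ≠ 1 by omega, show t ≠ 2 by omega, show t ≠ 3 by omega,
    show t ≠ 4 by omega]

theorem un_ne {f : ℕ × ℕ → ℕ × ℕ} {l : List (ℕ × ℕ)} (h : un f l ≠ []) : l ≠ [] := by
  rintro rfl; exact h rfl

theorem bin_ne {k l : List (ℕ × ℕ)} (h : bin k l ≠ []) : k ≠ [] ∧ l ≠ [] := by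
  constructor
  · rintro rfl; exact h rfl
  · rintro rfl
    cases k <;> exact h rfl

theorem encode_inj {M : Type} {e : M → ℕ} (he : Function.Injective e) :
    Function.Injective (OV.encode e) := by
  intro φ
  induction φ with
  | atom n => intro ψ h; cases ψ <;> simp_all [OV.encode]
  | neg φ ih =>
    intro ψ h
    cases ψ <;> simp [OV.encode] at h
    rw [ih h]
  | and φ φ' ih ih' =>
    intro ψ h
    cases ψ <;> simp [OV.encode] at h
    rw [ih h.1, ih' h.2]
  | ex φ ih =>
    intro ψ h
    cases ψ <;> simp [OV.encode] at h
    rw [ih h]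
  | box m φ ih =>
    intro ψ h
    cases ψ <;> simp [OV.encode] at h
    rw [ih h.2, he h.1]

def sf {M : Type} : OV M → List (OV M)
  | .atom n => [.atom n]
  | .neg χ => .neg χ :: sf χ
  | .and χ χ' => .and χ χ' :: (sf χ ++ sf χ')
  | .ex χ => .ex χ :: sf χ
  | .box m χ => .box m χ :: sf χ

theorem sf_head {M : Type} (χ : OV M) : (sf χ).head? = some χ := by
  cases χ <;> rfl

theorem sf_self {M : Type} (χ : OV M) : χ ∈ sf χ := by
  cases χ <;> simp [sf]

theorem sf_trans {M : Type} (χ : OV M) : ∀ η ∈ sf χ, sf η ⊆ sf χ := by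
  induction χ with
  | atom n => simp [sf]
  | neg χ ih =>
    intro η hη
    rcases List.mem_cons.1 hη with rfl | h
    · simp
    · exact List.subset_cons_of_subset _ (ih η h)
  | ex χ ih =>
    intro η hη
    rcases List.mem_cons.1 hη with rfl | h
    · simp
    · exact List.subset_cons_of_subset _ (ih η h)
  | box m χ ih =>
    intro η hη
    rcases List.mem_cons.1 hη with rfl | h
    · simp
    · exact List.subset_cons_of_subset _ (ih η h)
  | and χ χ' ih ih' =>
    intro η hη
    rcases List.mem_cons.1 hη with rfl | h
    · simp
    · rcases List.mem_append.1 h with h | h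
      · exact List.subset_cons_of_subset _ (List.subset_append_of_subset_left _ (ih η h))
      · exact List.subset_cons_of_subset _ (List.subset_append_of_subset_right _ (ih' η h))

theorem sf_subCl {M : Type} (φ ψ : OV M) : SubCl {χ | χ ∈ sf φ ++ sf ψ} := by
  have key : ∀ η ∈ sf φ ++ sf ψ, ∀ χ ∈ sf η, χ ∈ sf φ ++ sf ψ := by
    intro η hη χ hχ
    rcases List.mem_append.1 hη with h | h
    · exact List.mem_append_left _ (sf_trans _ _ h hχ)
    · exact List.mem_append_right _ (sf_trans _ _ h hχ)
  constructor
  · intro χ h; exact key _ h _ (by simp [sf, sf_self])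
  · intro χ χ' h; exact key _ h _ (by simp [sf, sf_self])
  · intro χ χ' h; exact key _ h _ (by simp [sf, sf_self])
  · intro χ h; exact key _ h _ (by simp [sf, sf_self])
  · intro m χ h; exact key _ h _ (by simp [sf, sf_self])

variable {M1 M2 : Type} (e1 : M1 → ℕ) (e2 : M2 → ℕ)

abbrev eS : M1 ⊕ M2 → ℕ := Sum.elim (fun m => 2 * e1 m) (fun m => 2 * e2 m + 1)

def cd2 (χ : OV (M1 ⊕ M2)) : ℕ × ℕ :=
  ((red1 (OV.encode (eS e1 e2)) χ).encode e1, (red2 (OV.encode (eS e1 e2)) χ).encode e2)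

theorem cd2_hom : Ops.Hom (ovOps (M1 ⊕ M2)) cOps (cd2 e1 e2) where
  ng a := by simp [cd2, ovOps, cOps, red1, red2, OV.encode]
  an a b := by simp [cd2, ovOps, cOps, red1, red2, OV.encode]
  ex a := by simp [cd2, ovOps, cOps, red1, red2, OV.encode]
  tp := by simp [cd2, ovOps, cOps, red1, red2, OV.encode]

theorem un_map {f : ℕ × ℕ → ℕ × ℕ} (χ : OV (M1 ⊕ M2)) :
    un f ((sf χ).map (cd2 e1 e2)) = f (cd2 e1 e2 χ) :: (sf χ).map (cd2 e1 e2) := by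
  simp [un, sf_head]

theorem FF_encode (hA : ∀ m, e1 m ∈ A) (hB : ∀ m, e2 m ∈ B) (χ : OV (M1 ⊕ M2)) :
    FF A B (χ.encode (eS e1 e2)) = (sf χ).map (cd2 e1 e2) := by
  induction χ with
  | atom n => simp [OV.encode, FF_atom, sf, cd2, red1, red2]
  | neg χ ih => rw [OV.encode, FF_neg, ih, un_map, ← (cd2_hom e1 e2).ng]; rfl
  | ex χ ih => rw [OV.encode, FF_ex, ih, un_map, ← (cd2_hom e1 e2).ex]; rfl
  | and χ χ' ih ih' =>
    rw [OV.encode, FF_and, ih, ih']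
    simp only [bin, List.head?_map, sf_head, Option.map_some, Option.bind_some, Option.getD_some,
      ← (cd2_hom e1 e2).an]
    simp [sf, ovOps]
  | box m χ ih =>
    rw [OV.encode, FF_box, ih]
    rcases m with m | m
    · rw [if_pos (by simp [hA]), un_map]
      simp [sf, cd2, red1, red2, OV.encode]
    · rw [if_neg (by simp), if_pos (by
        refine ⟨by simp, e2 m, hB m, by simp only [Sum.elim_inr]; omega⟩), un_map]
      have : (2 * e2 m + 1) / 2 = e2 m := by omega
      simp [sf, cd2, red1, red2, OV.encode, this]

theorem FF_valid (hA : ∀ a ∈ A, ∃ m, e1 m = a) (hB : ∀ a ∈ B, ∃ m, e2 m = a) (n : ℕ) :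
    FF A B n ≠ [] → ∃ χ : OV (M1 ⊕ M2), χ.encode (eS e1 e2) = n := by
  induction n using Nat.strong_induction_on with
  | _ n ih =>
    intro h
    obtain ⟨t, x, rfl⟩ : ∃ t x, n = Nat.pair t x := ⟨_, _, (Nat.pair_unpair n).symm⟩
    have hlt : 1 ≤ t → x < Nat.pair t x := fun h => lt_pair h
    obtain ⟨y, z, hyz⟩ : ∃ y z, x = Nat.pair y z := ⟨_, _, (Nat.pair_unpair x).symm⟩
    have hy : y ≤ x := hyz ▸ Nat.left_le_pair y z
    have hz : z ≤ x := hyz ▸ Nat.right_le_pair y z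
    rcases Nat.lt_or_ge t 5 with ht | ht
    · interval_cases t
      · exact ⟨.atom x, rfl⟩
      · rw [FF_neg] at h
        obtain ⟨χ, hχ⟩ := ih x (hlt (by norm_num)) (un_ne h)
        exact ⟨.neg χ, by rw [OV.encode, hχ]⟩
      · rw [hyz, FF_and] at h
        obtain ⟨χ, hχ⟩ := ih y (hy.trans_lt (hlt (by norm_num))) (bin_ne h).1
        obtain ⟨χ', hχ'⟩ := ih z (hz.trans_lt (hlt (by norm_num))) (bin_ne h).2
        exact ⟨.and χ χ', by rw [OV.encode, hχ, hχ', hyz]⟩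
      · rw [FF_ex] at h
        obtain ⟨χ, hχ⟩ := ih x (hlt (by norm_num)) (un_ne h)
        exact ⟨.ex χ, by rw [OV.encode, hχ]⟩
      · rw [hyz, FF_box] at h
        split_ifs at h with h1 h2
        · obtain ⟨χ, hχ⟩ := ih z (hz.trans_lt (hlt (by norm_num))) (un_ne h)
          obtain ⟨h1, _, ha, rfl⟩ := h1
          obtain ⟨m, hm⟩ := hA _ ha
          refine ⟨.box (.inl m) χ, ?_⟩
          have : 2 * e1 m = y := by omega
          rw [OV.encode, hχ, hyz]
          simp [this]
        · obtain ⟨χ, hχ⟩ := ih z (hz.trans_lt (hlt (by norm_num))) (un_ne h)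
          obtain ⟨h1, _, ha, rfl⟩ := h2
          obtain ⟨m, hm⟩ := hB _ ha
          refine ⟨.box (.inr m) χ, ?_⟩
          have : 2 * e2 m + 1 = y := by omega
          rw [OV.encode, hχ, hyz]
          simp [this]
        · exact absurd rfl h
    · exact absurd (FF_else A B ht) h

theorem eS_inj (he1 : Function.Injective e1) (he2 : Function.Injective e2) :
    Function.Injective (eS e1 e2) := by
  rintro (a | a) (b | b) h <;> simp at h
  · rw [he1 h]
  · omega
  · omega
  · rw [he2 h]

variable (d1 d2 : ℕ × ℕ → Bool)

def chk (a b : ℕ × ℕ) (S : List (ℕ × ℕ)) : Bool :=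
  !(d1 ((cOps.an a (cOps.dj S)).1, b.1) ||
    S.any fun q => d1 ((cOps.an a (cOps.dj S)).1, (cOps.ng q).1) ||
      d2 ((cOps.an a (cOps.dj S)).2, (cOps.ng q).2))

def decF (p : ℕ × ℕ) : Bool :=
  !((FF A B p.1).head?.isNone || (FF A B p.2).head?.isNone ||
    (subL (cOps.wt (FF A B p.1 ++ FF A B p.2))).any
      (chk d1 d2 (FF A B p.1).headI (FF A B p.2).headI))

open Computable in
theorem chk_comp' (h1 : Computable d1) (h2 : Computable d2) {α : Type} [Primcodable α]
    {u v : α → ℕ × ℕ} {w : α → List (ℕ × ℕ)} (hu : Computable u) (hv : Computable v)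
    (hw : Computable w) : Computable fun x => chk d1 d2 (u x) (v x) (w x) := by
  have hP : Computable fun x => cOps.an (u x) (cOps.dj (w x)) :=
    cOps_an.to_comp.comp hu (cOps_dj.to_comp.comp hw)
  have hor : Computable₂ Bool.or := Primrec.or.to_comp
  unfold chk
  refine Primrec.not.to_comp.comp (hor.comp ?_ (comp_any hw ?_))
  · exact h1.comp ((fst.comp hP).pair (fst.comp hv))
  · refine hor.comp ?_ ?_
    · exact h1.comp ((fst.comp (hP.comp fst)).pair (fst.comp (cOps_ng.to_comp.comp snd)))
    · exact h2.comp ((snd.comp (hP.comp fst)).pair (snd.comp (cOps_ng.to_comp.comp snd)))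

open Computable in
theorem decF_comp (h1 : Computable d1) (h2 : Computable d2) : Computable (decF A B d1 d2) := by
  have hor : Computable₂ Bool.or := Primrec.or.to_comp
  have f1 : Computable fun p : ℕ × ℕ => FF A B p.1 := (FF_primrec A B).to_comp.comp fst
  have f2 : Computable fun p : ℕ × ℕ => FF A B p.2 := (FF_primrec A B).to_comp.comp snd
  have hN : Computable fun l : List (ℕ × ℕ) => l.head?.isNone := by
    refine (Primrec.not.comp (Primrec.option_isSome.comp Primrec.list_head?)).to_comp.of_eq ?_
    intro l; cases l <;> rfl
  refine Primrec.not.to_comp.comp (hor.comp (hor.comp (hN.comp f1) (hN.comp f2)) (comp_any ?_ ?_))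
  · exact subL_primrec.to_comp.comp (cOps_wt.to_comp.comp (list_append.comp f1 f2))
  · have hI : Computable (List.headI : List (ℕ × ℕ) → _) := Primrec.list_headI.to_comp
    have g1 : Computable fun x : (ℕ × ℕ) × List (ℕ × ℕ) => (FF A B x.1.1).headI :=
      hI.comp (f1.comp fst)
    have g2 : Computable fun x : (ℕ × ℕ) × List (ℕ × ℕ) => (FF A B x.1.2).headI :=
      hI.comp (f2.comp fst)
    have g4 := chk_comp' d1 d2 h1 h2 g1 g2 snd
    exact g4

theorem headI_sf {χ : OV (M1 ⊕ M2)} : ((sf χ).map (cd2 e1 e2)).headI = cd2 e1 e2 χ := by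
  cases χ <;> rfl

theorem chk_iff {L1 : Set (OV M1)} {L2 : Set (OV M2)}
    (h1 : ∀ φ ψ, d1 (φ.encode e1, ψ.encode e1) = true ↔ GlobalConseq L1 φ ψ)
    (h2 : ∀ φ ψ, d2 (φ.encode e2, ψ.encode e2) = true ↔ GlobalConseq L2 φ ψ)
    (φ ψ : OV (M1 ⊕ M2)) (S : List (OV (M1 ⊕ M2))) :
    chk d1 d2 (cd2 e1 e2 φ) (cd2 e1 e2 ψ) (S.map (cd2 e1 e2)) = true ↔
      Cert (OV.encode (eS e1 e2)) L1 L2 φ ψ S := by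
  have H := cd2_hom e1 e2
  rw [chk, Cert]
  simp only [← H.dj, ← H.an, List.any_map, Function.comp_def, ← H.ng]
  simp only [cd2, Bool.not_eq_true', Bool.or_eq_false_iff, List.any_eq_false, Bool.or_eq_true,
    not_or]
  simp only [← Bool.not_eq_true, h1, h2]
  rfl

end comp

theorem fusion_globallyDecidable {M1 M2 : Type} [Finite M1] [Finite M2] (d : DSem)
    (e1 : M1 → ℕ) (e2 : M2 → ℕ)
    (he1 : Function.Injective e1) (he2 : Function.Injective e2)
    (C1 : Set (KFrame M1)) (C2 : Set (KFrame M2))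
    (hC1 : C1.Nonempty) (hC2 : C2.Nonempty)
    (hdu1 : ClosedDU C1) (hdu2 : ClosedDU C2)
    (L1 : Set (OV M1)) (L2 : Set (OV M2))
    (hL1 : IsOVLogic L1) (hL2 : IsOVLogic L2)
    (hc1 : GloballyDComplete d L1 C1) (hc2 : GloballyDComplete d L2 C2)
    (hd1 : GloballyDecidable e1 L1) (hd2 : GloballyDecidable e2 L2) :
    GloballyDecidable (Sum.elim (fun m => 2 * e1 m) (fun m => 2 * e2 m + 1))
      (fusion L1 L2) := by
  obtain ⟨d1, hd1c, hd1⟩ := ComputablePred.computable_iff.1 hd1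
  obtain ⟨d2, hd2c, hd2⟩ := ComputablePred.computable_iff.1 hd2
  have h1 : ∀ φ ψ, d1 (φ.encode e1, ψ.encode e1) = true ↔ GlobalConseq L1 φ ψ := by
    intro φ ψ
    rw [← iff_of_eq (congrFun hd1 _)]
    constructor
    · rintro ⟨φ', ψ', h, ha, hb⟩
      rw [← encode_inj he1 ha, ← encode_inj he1 hb]; exact h
    · intro h; exact ⟨_, _, h, rfl, rfl⟩
  have h2 : ∀ φ ψ, d2 (φ.encode e2, ψ.encode e2) = true ↔ GlobalConseq L2 φ ψ := by
    intro φ ψ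
    rw [← iff_of_eq (congrFun hd2 _)]
    constructor
    · rintro ⟨φ', ψ', h, ha, hb⟩
      rw [← encode_inj he2 ha, ← encode_inj he2 hb]; exact h
    · intro h; exact ⟨_, _, h, rfl, rfl⟩
  obtain ⟨A, hA⟩ : ∃ A : List ℕ, ∀ a, a ∈ A ↔ ∃ m, e1 m = a :=
    ⟨(Set.finite_range e1).toFinset.toList, by simp⟩
  obtain ⟨B, hB⟩ : ∃ B : List ℕ, ∀ a, a ∈ B ↔ ∃ m, e2 m = a :=
    ⟨(Set.finite_range e2).toFinset.toList, by simp⟩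
  have hc := encode_inj (eS_inj e1 e2 he1 he2)
  have hFF := FF_encode A B e1 e2 (fun m => (hA _).2 ⟨m, rfl⟩) (fun m => (hB _).2 ⟨m, rfl⟩)
  have main : ∀ φ ψ : OV (M1 ⊕ M2),
      decF A B d1 d2 (φ.encode (eS e1 e2), ψ.encode (eS e1 e2)) = true ↔
        GlobalConseq (fusion L1 L2) φ ψ := by
    intro φ ψ
    rw [decF]
    simp only [hFF, headI_sf, ← List.map_append, ← (cd2_hom e1 e2).wt, ← subL_map,
      List.head?_map, sf_head, Option.map_some, Option.isNone_some, Bool.false_or,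
      Bool.not_eq_true', List.any_eq_false, List.mem_map, forall_exists_index, and_imp,
      forall_apply_eq_imp_iff₂, chk_iff e1 e2 d1 d2 h1 h2]
    constructor
    · intro h
      by_contra hn
      obtain ⟨S, hS, hS'⟩ := cert_of_not hc L1 L2 φ ψ (sf φ ++ sf ψ) hn
      exact h S hS hS'
    · intro h S hS hS'
      exact not_of_cert d _ hdu1 hdu2 hc1 hc2 φ ψ (sf φ ++ sf ψ) (sf_subCl φ ψ)
        (List.mem_append_left _ (sf_self _)) (List.mem_append_right _ (sf_self _)) S
        (subL_subset _ S hS) hS' h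
  refine ComputablePred.computable_iff.2 ⟨decF A B d1 d2, decF_comp A B d1 d2 hd1c hd2c, ?_⟩
  funext ⟨n, m⟩
  apply propext
  constructor
  · rintro ⟨φ, ψ, h, rfl, rfl⟩
    exact (main φ ψ).2 h
  · intro h
    have hn : FF A B n ≠ [] := by
      intro h0; simp [decF, h0] at h
    have hm : FF A B m ≠ [] := by
      intro h0; simp [decF, h0] at h
    obtain ⟨φ, rfl⟩ := FF_valid A B e1 e2 (fun a => (hA a).1) (fun a => (hB a).1) n hn
    obtain ⟨ψ, rfl⟩ := FF_valid A B e1 e2 (fun a => (hA a).1) (fun a => (hB a).1) m hm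
    exact ⟨φ, ψ, (main φ ψ).1 h, rfl, rfl⟩

end OneVarML
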